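/- arXiv:2603.20944 — 2 statements merged into one kernel-verified Lean document; each statement's English description precedes it below -/
import Mathlib

section
/- Let β > 2 and let (α_N) satisfy α_N > 0 and α_N → 0. There exists a constant C > 0 such that if p(N) ∈ (0,1] satisfies N·p(N) ≥ C·log N for all sufficiently large N, then P-almost surely the following holds: if p(N)·N·α_N → ∞, the pushforward of μ^ε_{N,α_N,β} under σ ↦ (m₁(σ), m₂(σ)) converges weakly to (1/2)(δ_{(m⁺(β/2), m⁺(β/2))} + δ_{(m⁻(β/2), m⁻(β/2))}), and if p(N)·N·α_N → 0, it converges weakly to (1/4)(δ_{(m⁺(β/2), m⁺(β/2))} + δ_{(m⁺(β/2), m⁻(β/2))} + δ_{(m⁻(β/2), m⁺(β/2))} + δ_{(m⁻(β/2), m⁻(β/2))}), as N → ∞ through even integers. -/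
open MeasureTheory Filter

noncomputable section

/-- The spin value ±1 associated to a Boolean. -/
def spinVal (s : Bool) : ℝ := if s then 1 else -1

/-- A spin configuration on `N = 2n` sites, split into the two blocks
`B₁` (first component) and `B₂` (second component); the perfect matching
pairs the `i`-th spin of `B₁` with the `i`-th spin of `B₂`. -/
abbrev TwoConf (n : ℕ) := (Fin n → Bool) × (Fin n → Bool)

/-- Block magnetization `m₁(σ) = (2/N) ∑_{i ∈ B₁} σᵢ` with `N = 2n`. -/
def mag1 (n : ℕ) (σ : TwoConf n) : ℝ := (2 / (2 * n : ℝ)) * ∑ i, spinVal (σ.1 i)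

/-- Block magnetization `m₂(σ) = (2/N) ∑_{i ∈ B₂} σᵢ` with `N = 2n`. -/
def mag2 (n : ℕ) (σ : TwoConf n) : ℝ := (2 / (2 * n : ℝ)) * ∑ i, spinVal (σ.2 i)

/-- The diluted Hamiltonian
`H^ε_{N,α,β}(σ) = −(β/(2N))(∑_{i,j∈B₁} σᵢσⱼ + ∑_{i,j∈B₂} σᵢσⱼ)
  − α ∑_{i∈B₁} ε_i σᵢ σ_{i+N/2}` with `N = 2n`. -/
def dilH (n : ℕ) (α β : ℝ) (ε : Fin n → Bool) (σ : TwoConf n) : ℝ :=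
  -(β / (2 * (2 * n : ℝ))) *
      ((∑ i, ∑ j, spinVal (σ.1 i) * spinVal (σ.1 j)) +
        ∑ i, ∑ j, spinVal (σ.2 i) * spinVal (σ.2 j))
    - α * ∑ i, (if ε i then (1 : ℝ) else 0) * (spinVal (σ.1 i) * spinVal (σ.2 i))

/-- The distribution of the magnetization vector `(m₁, m₂)` under the quenched Gibbs
measure `μ^ε_{N,α,β}`, i.e. the pushforward of `μ^ε_{N,α,β}` under `σ ↦ (m₁(σ), m₂(σ))`. -/
def dilMagDist (n : ℕ) (α β : ℝ) (ε : Fin n → Bool) : Measure (ℝ × ℝ) :=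
  (∑ σ : TwoConf n, ENNReal.ofReal (Real.exp (-dilH n α β ε σ)))⁻¹ •
    ∑ σ : TwoConf n,
      ENNReal.ofReal (Real.exp (-dilH n α β ε σ)) • Measure.dirac (mag1 n σ, mag2 n σ)

/-- The law of the i.i.d. Bernoulli(q) dilution variables `(ε_i)_{i ∈ B₁}`. -/
def bernMeasure (n : ℕ) (q : ℝ) : Measure (Fin n → Bool) :=
  ∑ ε : Fin n → Bool,
    ENNReal.ofReal (∏ i, if ε i then q else 1 - q) • Measure.dirac ε

/-- The Hubbard-Stratonovich type rate function of the Curie-Weiss model. -/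
def rateG (γ x : ℝ) : ℝ := -(γ * x ^ 2 / 2) + Real.log (2 * Real.cosh (γ * x))

lemma hasDerivAt_tanh' (x : ℝ) : HasDerivAt Real.tanh (1 - Real.tanh x ^ 2) x := by
  have h1 := (Real.hasDerivAt_sinh x).div (Real.hasDerivAt_cosh x) (Real.cosh_pos x).ne'
  have : Real.tanh = fun y => Real.sinh y / Real.cosh y := by
    funext y; exact Real.tanh_eq_sinh_div_cosh y
  rw [this]
  refine HasDerivAt.congr_deriv (f := fun y => Real.sinh y / Real.cosh y) h1 ?_
  have := (Real.cosh_pos x).ne'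
  field_simp

lemma tanh_strictMono' : StrictMono Real.tanh := by
  apply strictMono_of_deriv_pos
  intro x
  rw [(hasDerivAt_tanh' x).deriv]
  have := Real.tanh_sq_lt_one x
  linarith

lemma hasDerivAt_hfun (γ x : ℝ) : HasDerivAt (fun z => Real.tanh (γ * z) - z)
    (γ * (1 - Real.tanh (γ * x) ^ 2) - 1) x := by
  have h1 : HasDerivAt (fun z => γ * z) γ x := by
    simpa using (hasDerivAt_id x).const_mul γ
  have h2 := ((hasDerivAt_tanh' (γ * x)).comp x h1).sub (hasDerivAt_id x)
  exact HasDerivAt.congr_deriv h2 (by ring)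

lemma hasDerivAt_rateG (γ x : ℝ) :
    HasDerivAt (rateG γ) (γ * (Real.tanh (γ * x) - x)) x := by
  have h1 : HasDerivAt (fun z => γ * z) γ x := by
    simpa using (hasDerivAt_id x).const_mul γ
  have h2 := (((Real.hasDerivAt_cosh (γ * x)).comp x h1).const_mul 2).log
    (by have := Real.cosh_pos (γ * x); simp; exact this.ne')
  have h3 := ((((hasDerivAt_id x).pow 2).const_mul γ).div_const 2).neg.add h2
  refine HasDerivAt.congr_deriv h3 ?_
  have := (Real.cosh_pos (γ * x)).ne'
  rw [Real.tanh_eq_sinh_div_cosh]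
  simp
  field_simp
  ring

lemma hfun_strictConcave (γ : ℝ) (hγ : 0 < γ) :
    StrictConcaveOn ℝ (Set.Ici 0) (fun z => Real.tanh (γ * z) - z) := by
  have hd : ∀ x, deriv (fun z => Real.tanh (γ * z) - z) x = γ * (1 - Real.tanh (γ * x) ^ 2) - 1 :=
    fun x => (hasDerivAt_hfun γ x).deriv
  apply StrictAntiOn.strictConcaveOn_of_deriv (convex_Ici 0)
  · exact fun x _ => (hasDerivAt_hfun γ x).continuousAt.continuousWithinAt
  · intro x hx y hy hxy
    rw [hd, hd]
    rw [interior_Ici] at hx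
    have hx' : 0 < x := hx
    have h1 : Real.tanh (γ * x) < Real.tanh (γ * y) := tanh_strictMono' (by gcongr)
    have h0 : 0 < Real.tanh (γ * x) := by
      have := tanh_strictMono' (show (0 : ℝ) < γ * x by positivity)
      simpa using this
    have h2 : Real.tanh (γ * x) ^ 2 < Real.tanh (γ * y) ^ 2 := by gcongr
    nlinarith

lemma mp_pos (γ : ℝ) (hγ : 1 < γ) (mp : ℝ)
    (hmax : ∀ z : ℝ, z = Real.tanh (γ * z) → z ≤ mp) : 0 < mp := by
  have hd := hasDerivAt_hfun γ 0
  simp only [mul_zero, Real.tanh_zero] at hd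
  have hpos : (0 : ℝ) < γ * (1 - 0 ^ 2) - 1 := by linarith
  have hev := hd.tendsto_slope_zero_right.eventually (eventually_gt_nhds hpos)
  have hev2 : ∀ᶠ t in nhdsWithin (0 : ℝ) (Set.Ioi 0), t < 1 :=
    nhdsWithin_le_nhds (eventually_lt_nhds one_pos)
  obtain ⟨t, ⟨ht1, ht2⟩, ht3⟩ := ((hev.and hev2).and self_mem_nhdsWithin).exists
  have ht0 : (0 : ℝ) < t := ht3
  simp at ht1
  have hht : 0 < Real.tanh (γ * t) - t := by
    rcases lt_or_ge 0 (Real.tanh (γ * t) - t) with h | h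
    · exact h
    · exfalso
      have : t⁻¹ * (Real.tanh (γ * t) - t) ≤ 0 :=
        mul_nonpos_of_nonneg_of_nonpos (by positivity) h
      linarith
  have hc : ContinuousOn (fun z => Real.tanh (γ * z) - z) (Set.Icc t 1) :=
    fun x _ => (hasDerivAt_hfun γ x).continuousAt.continuousWithinAt
  have hivt := intermediate_value_Icc' ht2.le hc
  have h1 : Real.tanh (γ * 1) - 1 ≤ 0 := by
    have := Real.tanh_lt_one (γ * 1); linarith
  obtain ⟨z, hz, hz0⟩ := hivt ⟨h1, hht.le⟩
  have := hmax z (by simp only at hz0; linarith)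
  linarith [hz.1]

lemma hfun_sign (γ : ℝ) (hγ : 1 < γ) (mp : ℝ) (hmp : 0 < mp)
    (hfix : mp = Real.tanh (γ * mp)) :
    (∀ x, 0 < x → x < mp → 0 < Real.tanh (γ * x) - x) ∧
    (∀ x, mp < x → Real.tanh (γ * x) - x < 0) := by
  have hc := hfun_strictConcave γ (by linarith)
  constructor
  · intro x hx hxm
    have := hc.2 (show (0 : ℝ) ∈ Set.Ici 0 by simp) (show mp ∈ Set.Ici (0 : ℝ) from hmp.le)
      hmp.ne
      (show (0 : ℝ) < 1 - x / mp by rw [sub_pos, div_lt_one hmp]; exact hxm) (show (0 : ℝ) < x / mp by positivity) (by ring)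
    have e : (1 - x / mp) • (0 : ℝ) + (x / mp) • mp = x := by
      simp; field_simp
    rw [e] at this
    simp only [mul_zero, Real.tanh_zero, ← hfix, sub_self, smul_zero, add_zero] at this
    exact this
  · intro x hxm
    have hx : 0 < x := hmp.trans hxm
    have := hc.2 (show (0 : ℝ) ∈ Set.Ici 0 by simp) (show x ∈ Set.Ici (0 : ℝ) from hx.le)
      hx.ne
      (show (0 : ℝ) < 1 - mp / x by rw [sub_pos, div_lt_one hx]; exact hxm) (show (0 : ℝ) < mp / x by positivity) (by ring)
    have e : (1 - mp / x) • (0 : ℝ) + (mp / x) • x = mp := by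
      simp; field_simp
    rw [e] at this
    simp only [mul_zero, Real.tanh_zero, ← hfix, sub_self, zero_add, smul_eq_mul] at this
    by_contra hcon
    push Not at hcon
    have : 0 ≤ mp / x * (Real.tanh (γ * x) - x) := by positivity
    linarith

lemma rateG_neg (γ x : ℝ) : rateG γ (-x) = rateG γ x := by
  simp [rateG]

lemma rateG_abs (γ x : ℝ) : rateG γ |x| = rateG γ x := by
  rcases abs_choice x with h | h <;> rw [h]
  exact rateG_neg γ x

lemma rateG_cont (γ : ℝ) : Continuous (rateG γ) :=
  continuous_iff_continuousAt.2 fun x => (hasDerivAt_rateG γ x).continuousAt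

lemma rateG_lt (γ : ℝ) (hγ : 1 < γ) (mp : ℝ) (hmp : 0 < mp)
    (hfix : mp = Real.tanh (γ * mp)) (x : ℝ) (hx0 : 0 ≤ x) (hx : x ≠ mp) :
    rateG γ x < rateG γ mp := by
  obtain ⟨h1, h2⟩ := hfun_sign γ hγ mp hmp hfix
  rcases lt_or_gt_of_ne hx with h | h
  · have : StrictMonoOn (rateG γ) (Set.Icc 0 mp) := by
      apply strictMonoOn_of_deriv_pos (convex_Icc 0 mp) (rateG_cont γ).continuousOn
      intro y hy
      rw [interior_Icc] at hy
      rw [(hasDerivAt_rateG γ y).deriv]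
      have := h1 y hy.1 hy.2
      positivity
    exact this ⟨hx0, h.le⟩ ⟨hmp.le, le_rfl⟩ h
  · have : StrictAntiOn (rateG γ) (Set.Ici mp) := by
      apply strictAntiOn_of_deriv_neg (convex_Ici mp) (rateG_cont γ).continuousOn
      intro y hy
      rw [interior_Ici] at hy
      rw [(hasDerivAt_rateG γ y).deriv]
      have := h2 y hy
      exact mul_neg_of_pos_of_neg (by linarith) this
    exact this (Set.mem_Ici.2 le_rfl) (Set.mem_Ici.2 h.le) h

lemma rateG_le (γ : ℝ) (hγ : 1 < γ) (mp : ℝ) (hmp : 0 < mp)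
    (hfix : mp = Real.tanh (γ * mp)) (x : ℝ) : rateG γ x ≤ rateG γ mp := by
  rw [← rateG_abs]
  rcases eq_or_ne |x| mp with h | h
  · rw [h]
  · exact (rateG_lt γ hγ mp hmp hfix _ (abs_nonneg x) h).le

lemma rateG_gap (γ : ℝ) (hγ : 1 < γ) (mp : ℝ) (hmp : 0 < mp)
    (hfix : mp = Real.tanh (γ * mp)) (δ : ℝ) (hδ : 0 < δ) :
    ∃ κ > 0, ∀ x ∈ Set.Icc (-1 : ℝ) 1, δ ≤ |(|x| - mp)| → rateG γ x ≤ rateG γ mp - κ := by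
  have hK : IsCompact (Set.Icc (-1 : ℝ) 1 ∩ {x | δ ≤ |(|x| - mp)|}) :=
    isCompact_Icc.inter_right (isClosed_le continuous_const (by fun_prop))
  rcases Set.eq_empty_or_nonempty (Set.Icc (-1 : ℝ) 1 ∩ {x | δ ≤ |(|x| - mp)|}) with he | hne
  · refine ⟨1, one_pos, fun x hx hx2 => ?_⟩
    have : x ∈ (Set.Icc (-1 : ℝ) 1 ∩ {x | δ ≤ |(|x| - mp)|}) := ⟨hx, hx2⟩
    rw [he] at this
    exact this.elim
  · obtain ⟨y, hy, hmaxy⟩ := hK.exists_isMaxOn hne (rateG_cont γ).continuousOn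
    refine ⟨rateG γ mp - rateG γ y, ?_, fun x hx hx2 => ?_⟩
    · have h1 : |y| ≠ mp := by
        intro h
        have h2 : δ ≤ |(|y| - mp)| := hy.2
        rw [h] at h2
        simp at h2
        linarith
      have := rateG_lt γ hγ mp hmp hfix |y| (abs_nonneg y) h1
      rw [rateG_abs] at this
      linarith
    · have : rateG γ x ≤ rateG γ y := hmaxy ⟨hx, hx2⟩
      linarith

/-- A good tilt parameter. -/
lemma exists_tilt (c : ℝ) (hc : 0 < c) (hc1 : c < 1) :
    ∃ s > 0, ∃ θ > 0, 0 < Real.cosh s - c * Real.sinh s ∧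
      Real.exp (s * θ) * (Real.cosh s - c * Real.sinh s) < 1 := by
  have hd : HasDerivAt (fun s => Real.cosh s - c * Real.sinh s) (-c) 0 := by
    have := (Real.hasDerivAt_cosh 0).sub ((Real.hasDerivAt_sinh 0).const_mul c)
    exact HasDerivAt.congr_deriv this (by simp)
  have hev := hd.tendsto_slope_zero_right.eventually
    (eventually_lt_nhds (show -c < 0 by linarith))
  obtain ⟨s, hs1, hs2⟩ := (hev.and self_mem_nhdsWithin).exists
  have hs : (0 : ℝ) < s := hs2
  simp at hs1
  have hlt : Real.cosh s - c * Real.sinh s < 1 := by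
    by_contra hcon
    push Not at hcon
    have : 0 ≤ s⁻¹ * (Real.cosh s - c * Real.sinh s - 1) :=
      mul_nonneg (by positivity) (by linarith)
    linarith
  have hpos : 0 < Real.cosh s - c * Real.sinh s := by
    have h1 := Real.sinh_lt_cosh s
    have h2 : 0 < Real.sinh s := Real.sinh_pos_iff.2 hs
    nlinarith
  have hct : Tendsto (fun θ => Real.exp (s * θ) * (Real.cosh s - c * Real.sinh s))
      (nhdsWithin 0 (Set.Ioi 0)) (nhds (Real.exp (s * 0) * (Real.cosh s - c * Real.sinh s))) := by
    apply tendsto_nhdsWithin_of_tendsto_nhds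
    apply Continuous.tendsto
    fun_prop
  have hev := hct.eventually (eventually_lt_nhds (b := 1) (by simpa using hlt))
  obtain ⟨θ, hθ, hθ2⟩ := (hev.and self_mem_nhdsWithin).exists
  exact ⟨s, hs, θ, hθ2, hpos, hθ⟩

/-- Number of active matching edges. -/
def numOn {n : ℕ} (ε : Fin n → Bool) : ℕ := (Finset.univ.filter (fun i => ε i = true)).card

/-- Interaction along the matching. -/
def spinX {n : ℕ} (ε : Fin n → Bool) (σ : TwoConf n) : ℝ :=
  ∑ i, (if ε i then (1 : ℝ) else 0) * (spinVal (σ.1 i) * spinVal (σ.2 i))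

/-- Unperturbed Gibbs weight. -/
def wt0 (γ : ℝ) (n : ℕ) (σ : TwoConf n) : ℝ :=
  Real.exp (n * (γ / 2) * (mag1 n σ ^ 2 + mag2 n σ ^ 2))

lemma sum_prod_two (n : ℕ) (F : Fin n → Bool → Bool → ℝ) :
    ∑ σ : TwoConf n, ∏ i, F i (σ.1 i) (σ.2 i) = ∏ i, ∑ q : Bool × Bool, F i q.1 q.2 := by
  rw [Finset.prod_univ_sum, Fintype.piFinset_univ]
  refine (Equiv.sum_comp (Equiv.arrowProdEquivProdArrow (Fin n) (fun _ => Bool) (fun _ => Bool))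
    (fun σ : TwoConf n => ∏ i, F i (σ.1 i) (σ.2 i))).symm.trans ?_
  rfl

lemma factor_on (b c s : ℝ) :
    ∑ q : Bool × Bool, Real.exp (b * spinVal q.1 + c * spinVal q.2 +
      s * (spinVal q.1 * spinVal q.2)) =
    4 * Real.cosh b * Real.cosh c * (Real.cosh s + Real.sinh s * (Real.tanh b * Real.tanh c)) := by
  have hb := (Real.cosh_pos b).ne'
  have hc := (Real.cosh_pos c).ne'
  have e : 4 * Real.cosh b * Real.cosh c *
      (Real.cosh s + Real.sinh s * (Real.tanh b * Real.tanh c)) =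
      4 * (Real.cosh b * Real.cosh c * Real.cosh s + Real.sinh b * Real.sinh c * Real.sinh s) := by
    rw [Real.tanh_eq_sinh_div_cosh, Real.tanh_eq_sinh_div_cosh]
    field_simp
  rw [e]
  simp only [Fintype.sum_prod_type, Fintype.sum_bool, spinVal, if_true, Bool.false_eq_true,
    if_false, Real.cosh_eq, Real.sinh_eq, Real.exp_add, mul_one, mul_neg, neg_neg]
  ring

lemma exp_tilt_eq (n : ℕ) (b c s : ℝ) (ε : Fin n → Bool) (σ : TwoConf n) :
    Real.exp (b * ∑ i, spinVal (σ.1 i) + c * ∑ i, spinVal (σ.2 i) + s * spinX ε σ) =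
    ∏ i, Real.exp (b * spinVal (σ.1 i) + c * spinVal (σ.2 i) +
      (if ε i then s else 0) * (spinVal (σ.1 i) * spinVal (σ.2 i))) := by
  rw [← Real.exp_sum, Finset.sum_add_distrib, Finset.sum_add_distrib, Finset.mul_sum,
    Finset.mul_sum, spinX, Finset.mul_sum]
  congr 2
  apply Finset.sum_congr rfl
  intro i _
  split_ifs <;> ring

lemma tilt_sum (n : ℕ) (b c s : ℝ) (ε : Fin n → Bool) :
    ∑ σ : TwoConf n, Real.exp (b * ∑ i, spinVal (σ.1 i) + c * ∑ i, spinVal (σ.2 i)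
      + s * spinX ε σ) =
    (4 * Real.cosh b * Real.cosh c) ^ n *
      (Real.cosh s + Real.sinh s * (Real.tanh b * Real.tanh c)) ^ numOn ε := by
  simp_rw [exp_tilt_eq]
  rw [sum_prod_two n (fun i x y => Real.exp (b * spinVal x + c * spinVal y +
      (if ε i then s else 0) * (spinVal x * spinVal y)))]
  simp_rw [factor_on]
  rw [Finset.prod_mul_distrib, Finset.prod_const, Finset.card_univ, Fintype.card_fin]
  congr 1
  rw [numOn, ← Finset.prod_const, Finset.prod_filter]
  apply Finset.prod_congr rfl
  intro i _
  split_ifs <;> simp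

lemma sum_spin_eq (n : ℕ) (hn : 0 < n) (σ : TwoConf n) :
    (∑ i, spinVal (σ.1 i) = n * mag1 n σ) ∧ (∑ i, spinVal (σ.2 i) = n * mag2 n σ) := by
  have : (n : ℝ) ≠ 0 := by positivity
  constructor
  · rw [mag1]; field_simp
  · rw [mag2]; field_simp

lemma dilH_eq (n : ℕ) (hn : 0 < n) (α β : ℝ) (ε : Fin n → Bool) (σ : TwoConf n) :
    Real.exp (-dilH n α β ε σ) = wt0 (β / 2) n σ * Real.exp (α * spinX ε σ) := by
  rw [wt0, ← Real.exp_add]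
  congr 1
  have : (n : ℝ) ≠ 0 := by positivity
  have h1 := sum_spin_eq n hn σ
  rw [dilH, ← Finset.sum_mul_sum, ← Finset.sum_mul_sum, h1.1, h1.2, spinX]
  field_simp
  ring

/-- The tilted weight at reference point `(x, y)`. -/
def tiltW (γ : ℝ) (n : ℕ) (x y : ℝ) (σ : TwoConf n) : ℝ :=
  Real.exp (n * γ * (x * mag1 n σ + y * mag2 n σ) - n * (γ / 2) * (x ^ 2 + y ^ 2))

lemma tiltW_sum (γ : ℝ) (n : ℕ) (hn : 0 < n) (x y s : ℝ) (ε : Fin n → Bool) :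
    ∑ σ : TwoConf n, tiltW γ n x y σ * Real.exp (s * spinX ε σ) =
    Real.exp (n * (rateG γ x + rateG γ y)) *
      (Real.cosh s + Real.sinh s * (Real.tanh (γ * x) * Real.tanh (γ * y))) ^ numOn ε := by
  have h := tilt_sum n (γ * x) (γ * y) s ε
  have e1 : ∀ σ : TwoConf n, tiltW γ n x y σ * Real.exp (s * spinX ε σ) =
      Real.exp (- (n * (γ / 2) * (x ^ 2 + y ^ 2))) *
      Real.exp (γ * x * ∑ i, spinVal (σ.1 i) + γ * y * ∑ i, spinVal (σ.2 i)
      + s * spinX ε σ) := by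
    intro σ
    rw [tiltW, ← Real.exp_add, ← Real.exp_add, (sum_spin_eq n hn σ).1, (sum_spin_eq n hn σ).2]
    congr 1
    ring
  simp_rw [e1]
  rw [← Finset.mul_sum, h, ← mul_assoc]
  congr 1
  have hx : 0 < 2 * Real.cosh (γ * x) := by have := Real.cosh_pos (γ * x); positivity
  have hy : 0 < 2 * Real.cosh (γ * y) := by have := Real.cosh_pos (γ * y); positivity
  have e2 : Real.exp (n * (rateG γ x + rateG γ y)) =
      Real.exp (- (n * (γ / 2) * (x ^ 2 + y ^ 2))) *
      (Real.exp (Real.log (2 * Real.cosh (γ * x))) *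
        Real.exp (Real.log (2 * Real.cosh (γ * y)))) ^ n := by
    rw [← Real.exp_add, ← Real.exp_nat_mul, ← Real.exp_add, rateG, rateG]
    congr 1
    ring
  rw [e2, Real.exp_log hx, Real.exp_log hy]
  congr 2
  ring

lemma tiltW_le_wt0 (γ : ℝ) (hγ : 0 < γ) (n : ℕ) (x y : ℝ) (σ : TwoConf n) :
    tiltW γ n x y σ ≤ wt0 γ n σ := by
  rw [tiltW, wt0]
  apply Real.exp_le_exp.2
  have h1 := sq_nonneg (mag1 n σ - x)
  have h2 := sq_nonneg (mag2 n σ - y)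
  have h3 : 0 ≤ n * (γ / 2) * ((mag1 n σ - x) ^ 2 + (mag2 n σ - y) ^ 2) := by positivity
  nlinarith

lemma Z0_lower (γ : ℝ) (hγ : 0 < γ) (n : ℕ) (hn : 0 < n) (x : ℝ) :
    Real.exp (n * (2 * rateG γ x)) ≤ ∑ σ : TwoConf n, wt0 γ n σ := by
  have h := tiltW_sum γ n hn x x 0 (fun _ => false)
  simp at h
  rw [show (n : ℝ) * (2 * rateG γ x) = n * (rateG γ x + rateG γ x) by ring, ← h]
  exact Finset.sum_le_sum fun σ _ => tiltW_le_wt0 γ hγ n x x σ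

/-- Possible values of the magnetization. -/
def magVal (n k : ℕ) : ℝ := (2 * k - n) / n

lemma block_val (n : ℕ) (hn : 0 < n) (τ : Fin n → Bool) :
    ∃ k ∈ Finset.range (n + 1), (2 / (2 * n : ℝ)) * ∑ i, spinVal (τ i) = magVal n k := by
  refine ⟨(Finset.univ.filter (fun i => τ i = true)).card, ?_, ?_⟩
  · rw [Finset.mem_range, Nat.lt_succ_iff]
    exact (Finset.card_le_univ _).trans (by simp)
  · have hn' : (n : ℝ) ≠ 0 := by positivity
    have : ∑ i, spinVal (τ i) = 2 * ((Finset.univ.filter (fun i => τ i = true)).card : ℝ) - n := by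
      have e : ∀ i, spinVal (τ i) = 2 * (if τ i = true then (1 : ℝ) else 0) - 1 := by
        intro i; rw [spinVal]; split_ifs <;> norm_num
      simp_rw [e]
      rw [Finset.sum_sub_distrib, ← Finset.mul_sum, Finset.sum_boole]
      simp
    rw [this, magVal]
    field_simp

lemma magVal_mem (n : ℕ) (hn : 0 < n) (k : ℕ) (hk : k ∈ Finset.range (n + 1)) :
    magVal n k ∈ Set.Icc (-1 : ℝ) 1 := by
  have hk' : (k : ℝ) ≤ n := by
    rw [Finset.mem_range, Nat.lt_succ_iff] at hk; exact_mod_cast hk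
  have hn' : (0 : ℝ) < n := by positivity
  have hk0 : (0 : ℝ) ≤ k := by positivity
  rw [magVal]
  constructor
  · rw [le_div_iff₀ hn']; linarith
  · rw [div_le_iff₀ hn']; linarith

open Classical in
/-- Main upper bound. -/
lemma region_upper (γ : ℝ) (n : ℕ) (hn : 0 < n) (s : ℝ) (ε : Fin n → Bool)
    (Q : ℝ → ℝ → Prop) (B : ℝ) (hB0 : 0 ≤ B)
    (hB : ∀ x ∈ Set.Icc (-1 : ℝ) 1, ∀ y ∈ Set.Icc (-1 : ℝ) 1, Q x y →
      Real.exp (n * (rateG γ x + rateG γ y)) *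
      (Real.cosh s + Real.sinh s * (Real.tanh (γ * x) * Real.tanh (γ * y))) ^ numOn ε ≤ B) :
    ∑ σ : TwoConf n, (if Q (mag1 n σ) (mag2 n σ) then
      wt0 γ n σ * Real.exp (s * spinX ε σ) else 0) ≤ (n + 1) ^ 2 * B := by
  have step : ∀ σ : TwoConf n, (if Q (mag1 n σ) (mag2 n σ) then
      wt0 γ n σ * Real.exp (s * spinX ε σ) else 0) ≤
      ∑ k ∈ Finset.range (n + 1) ×ˢ Finset.range (n + 1),
        (if Q (magVal n k.1) (magVal n k.2) then
          tiltW γ n (magVal n k.1) (magVal n k.2) σ * Real.exp (s * spinX ε σ) else 0) := by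
    intro σ
    obtain ⟨k, hk, hk2⟩ := block_val n hn σ.1
    obtain ⟨l, hl, hl2⟩ := block_val n hn σ.2
    have hm1 : mag1 n σ = magVal n k := hk2
    have hm2 : mag2 n σ = magVal n l := hl2
    refine le_trans ?_ (Finset.single_le_sum (f := fun k : ℕ × ℕ =>
      (if Q (magVal n k.1) (magVal n k.2) then
          tiltW γ n (magVal n k.1) (magVal n k.2) σ * Real.exp (s * spinX ε σ) else 0)) ?_
      (Finset.mk_mem_product hk hl))
    · simp only [← hm1, ← hm2]
      split_ifs with hQ
      · apply le_of_eq
        congr 1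
        rw [wt0, tiltW]
        congr 1
        ring
      · exact le_rfl
    · intro i _
      split_ifs
      · rw [tiltW]; positivity
      · exact le_rfl
  refine (Finset.sum_le_sum fun σ _ => step σ).trans ?_
  rw [Finset.sum_comm]
  have hcard : ((n : ℝ) + 1) ^ 2 * B =
      ∑ k ∈ Finset.range (n + 1) ×ˢ Finset.range (n + 1), B := by
    rw [Finset.sum_const, Finset.card_product, Finset.card_range, nsmul_eq_mul]
    push_cast
    ring
  rw [hcard]
  apply Finset.sum_le_sum
  intro k hk
  rw [Finset.mem_product] at hk
  by_cases hQ : Q (magVal n k.1) (magVal n k.2)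
  · simp only [hQ, if_true]
    rw [tiltW_sum γ n hn]
    exact hB _ (magVal_mem n hn _ hk.1) _ (magVal_mem n hn _ hk.2) hQ
  · simp only [hQ, if_false, Finset.sum_const_zero]
    exact hB0

/-- Flip of the second block. -/
def flip2 (n : ℕ) : TwoConf n ≃ TwoConf n where
  toFun σ := (σ.1, fun i => !σ.2 i)
  invFun σ := (σ.1, fun i => !σ.2 i)
  left_inv σ := by simp
  right_inv σ := by simp

/-- Flip of the first block. -/
def flip1 (n : ℕ) : TwoConf n ≃ TwoConf n where
  toFun σ := (fun i => !σ.1 i, σ.2)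
  invFun σ := (fun i => !σ.1 i, σ.2)
  left_inv σ := by simp
  right_inv σ := by simp

lemma spinVal_not (b : Bool) : spinVal (!b) = - spinVal b := by
  cases b <;> simp [spinVal]

lemma mag1_flip1 (n : ℕ) (σ : TwoConf n) : mag1 n (flip1 n σ) = - mag1 n σ := by
  simp [mag1, flip1, spinVal_not]
lemma mag2_flip1 (n : ℕ) (σ : TwoConf n) : mag2 n (flip1 n σ) = mag2 n σ := by
  simp [mag2, flip1]
lemma mag1_flip2 (n : ℕ) (σ : TwoConf n) : mag1 n (flip2 n σ) = mag1 n σ := by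
  simp [mag1, flip2]
lemma mag2_flip2 (n : ℕ) (σ : TwoConf n) : mag2 n (flip2 n σ) = - mag2 n σ := by
  simp [mag2, flip2, spinVal_not]
lemma spinX_flip1 (n : ℕ) (ε : Fin n → Bool) (σ : TwoConf n) :
    spinX ε (flip1 n σ) = - spinX ε σ := by
  simp [spinX, flip1, spinVal_not]
lemma spinX_flip2 (n : ℕ) (ε : Fin n → Bool) (σ : TwoConf n) :
    spinX ε (flip2 n σ) = - spinX ε σ := by
  simp [spinX, flip2, spinVal_not]
lemma wt0_flip1 (γ : ℝ) (n : ℕ) (σ : TwoConf n) : wt0 γ n (flip1 n σ) = wt0 γ n σ := by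
  simp [wt0, mag1_flip1, mag2_flip1]
lemma wt0_flip2 (γ : ℝ) (n : ℕ) (σ : TwoConf n) : wt0 γ n (flip2 n σ) = wt0 γ n σ := by
  simp [wt0, mag1_flip2, mag2_flip2]

lemma wt0_pos (γ : ℝ) (n : ℕ) (σ : TwoConf n) : 0 < wt0 γ n σ := Real.exp_pos _

lemma Z_ge (γ : ℝ) (n : ℕ) (a : ℝ) (ε : Fin n → Bool) :
    ∑ σ : TwoConf n, wt0 γ n σ ≤ ∑ σ : TwoConf n, wt0 γ n σ * Real.exp (a * spinX ε σ) := by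
  have h := Equiv.sum_comp (flip2 n) (fun σ => wt0 γ n σ * Real.exp (a * spinX ε σ))
  simp only [wt0_flip2, spinX_flip2] at h
  have h2 : 2 * ∑ σ : TwoConf n, wt0 γ n σ ≤
      2 * ∑ σ : TwoConf n, wt0 γ n σ * Real.exp (a * spinX ε σ) := by
    rw [two_mul (∑ σ : TwoConf n, wt0 γ n σ * Real.exp (a * spinX ε σ))]
    nth_rewrite 2 [← h]
    rw [← Finset.sum_add_distrib, Finset.mul_sum]
    apply Finset.sum_le_sum
    intro σ _
    have h3 := Real.add_one_le_exp (a * spinX ε σ)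
    have h4 := Real.add_one_le_exp (a * -spinX ε σ)
    have := wt0_pos γ n σ
    nlinarith
  linarith

lemma abs_spinX_le (n : ℕ) (ε : Fin n → Bool) (σ : TwoConf n) : |spinX ε σ| ≤ numOn ε := by
  rw [spinX]
  refine (Finset.abs_sum_le_sum_abs _ _).trans ?_
  rw [numOn, ← Finset.sum_boole]
  apply Finset.sum_le_sum
  intro i _
  rw [abs_mul, abs_mul]
  have h : ∀ b, |spinVal b| = 1 := by intro b; cases b <;> simp [spinVal]
  rw [h, h]
  split_ifs <;> simp

lemma numOn_le (n : ℕ) (ε : Fin n → Bool) : numOn ε ≤ n :=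
  (Finset.card_le_univ _).trans (by simp)

open Classical in
lemma bad1_bound (γ : ℝ) (hγ : 1 < γ) (mp : ℝ) (hmp : 0 < mp)
    (hfix : mp = Real.tanh (γ * mp)) (δ : ℝ) (hδ : 0 < δ) :
    ∃ κ > 0, ∀ n : ℕ, 0 < n → ∀ a : ℝ, 0 ≤ a → ∀ ε : Fin n → Bool,
      ∑ σ : TwoConf n, (if (δ ≤ |(|mag1 n σ| - mp)| ∨ δ ≤ |(|mag2 n σ| - mp)|) then
        wt0 γ n σ * Real.exp (a * spinX ε σ) else 0) ≤
      ((n + 1) ^ 2 * Real.exp ((a - κ) * n)) *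
        ∑ σ : TwoConf n, wt0 γ n σ := by
  obtain ⟨κ, hκ, hgap⟩ := rateG_gap γ hγ mp hmp hfix δ hδ
  refine ⟨κ, hκ, fun n hn a ha ε => ?_⟩
  have h0 := region_upper γ n hn 0 ε (fun x y => δ ≤ |(|x| - mp)| ∨ δ ≤ |(|y| - mp)|)
    (Real.exp (n * (2 * rateG γ mp)) * Real.exp (-κ * n)) (by positivity) (by
      intro x hx y hy hQ
      simp only [Real.cosh_zero, Real.sinh_zero, zero_mul, add_zero, one_pow, mul_one]
      rw [← Real.exp_add]
      apply Real.exp_le_exp.2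
      have h1 := rateG_le γ hγ mp hmp hfix x
      have h2 := rateG_le γ hγ mp hmp hfix y
      have : rateG γ x + rateG γ y ≤ 2 * rateG γ mp - κ := by
        rcases hQ with h | h
        · have := hgap x hx h; linarith
        · have := hgap y hy h; linarith
      have hn' : (0 : ℝ) ≤ n := by positivity
      nlinarith)
  simp only [zero_mul, Real.exp_zero, mul_one] at h0
  have hZ := Z0_lower γ (by linarith) n hn mp
  have h1 : ∑ σ : TwoConf n, (if (δ ≤ |(|mag1 n σ| - mp)| ∨ δ ≤ |(|mag2 n σ| - mp)|) then
        wt0 γ n σ * Real.exp (a * spinX ε σ) else 0) ≤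
      Real.exp (a * n) * ∑ σ : TwoConf n,
        (if (δ ≤ |(|mag1 n σ| - mp)| ∨ δ ≤ |(|mag2 n σ| - mp)|) then wt0 γ n σ else 0) := by
    rw [Finset.mul_sum]
    apply Finset.sum_le_sum
    intro σ _
    split_ifs
    · rw [mul_comm]
      have hX : spinX ε σ ≤ n := (le_abs_self _).trans
        ((abs_spinX_le n ε σ).trans (by exact_mod_cast numOn_le n ε))
      have := (wt0_pos γ n σ).le
      gcongr
    · simp
  refine h1.trans ?_
  calc _ ≤ Real.exp (a * n) * ((n + 1) ^ 2 *
        (Real.exp (n * (2 * rateG γ mp)) * Real.exp (-κ * n))) := by gcongr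
    _ = ((n + 1) ^ 2 * Real.exp ((a - κ) * n)) * Real.exp (n * (2 * rateG γ mp)) := by
        rw [show (a - κ) * n = a * n + -κ * n by ring, Real.exp_add]; ring
    _ ≤ _ := by gcongr

open Classical in
lemma bad2_bound (γ : ℝ) (hγ : 1 < γ) (mp : ℝ) (hmp : 0 < mp)
    (hfix : mp = Real.tanh (γ * mp)) :
    ∃ s > 0, ∃ θ > 0, ∃ ρ > 0, ρ < 1 ∧ ∀ n : ℕ, 0 < n → ∀ a : ℝ, 0 ≤ a → a ≤ s →
      ∀ ε : Fin n → Bool,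
      ∑ σ : TwoConf n, (if (mp / 2 ≤ |mag1 n σ| ∧ mp / 2 ≤ |mag2 n σ| ∧
          mag1 n σ * mag2 n σ < 0) then
        wt0 γ n σ * Real.exp (a * spinX ε σ) else 0) ≤
      (Real.exp (-(θ * (a * numOn ε))) * (1 + (n + 1) ^ 2 * ρ ^ numOn ε)) *
        ∑ σ : TwoConf n, wt0 γ n σ := by
  set t := Real.tanh (γ * (mp / 2)) with ht
  have ht0 : 0 < t := by
    have := tanh_strictMono' (show (0 : ℝ) < γ * (mp / 2) by positivity)
    simpa using this
  have ht1 : t < 1 := Real.tanh_lt_one _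
  obtain ⟨s, hs, θ, hθ, hρ0, hρ1⟩ := exists_tilt (t * t) (by positivity) (by nlinarith)
  set r := Real.cosh s - t * t * Real.sinh s with hr
  refine ⟨s, hs, θ, hθ, Real.exp (s * θ) * r, by positivity, hρ1, ?_⟩
  intro n hn a ha has ε
  have hsinh : 0 < Real.sinh s := Real.sinh_pos_iff.2 hs
  have hprod : ∀ x y : ℝ, mp / 2 ≤ |x| → mp / 2 ≤ |y| → x * y < 0 →
      Real.tanh (γ * x) * Real.tanh (γ * y) ≤ -(t * t) := by
    have key : ∀ x y : ℝ, mp / 2 ≤ x → mp / 2 ≤ -y →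
        Real.tanh (γ * x) * Real.tanh (γ * y) ≤ -(t * t) := by
      intro x y hx hy
      have h1 : t ≤ Real.tanh (γ * x) := tanh_strictMono'.monotone (by gcongr)
      have h2 : t ≤ Real.tanh (γ * -y) := tanh_strictMono'.monotone (by gcongr)
      rw [mul_neg, Real.tanh_neg] at h2
      nlinarith
    intro x y hx hy hxy
    rcases lt_trichotomy x 0 with h | h | h
    · have hy0 : 0 < y := by by_contra hc; push Not at hc; nlinarith
      rw [abs_of_neg h] at hx
      rw [abs_of_pos hy0] at hy
      rw [mul_comm]
      exact key y x hy hx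
    · rw [h] at hxy; simp at hxy
    · have hy0 : y < 0 := by by_contra hc; push Not at hc; nlinarith
      rw [abs_of_pos h] at hx
      rw [abs_of_neg hy0] at hy
      exact key x y hx hy
  have h0 := region_upper γ n hn s ε (fun x y => mp / 2 ≤ |x| ∧ mp / 2 ≤ |y| ∧ x * y < 0)
    (Real.exp (n * (2 * rateG γ mp)) * r ^ numOn ε) (by positivity) (by
      intro x hx y hy hQ
      have h1 := rateG_le γ hγ mp hmp hfix x
      have h2 := rateG_le γ hγ mp hmp hfix y
      have h3 := hprod x y hQ.1 hQ.2.1 hQ.2.2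
      have h4 : -1 ≤ Real.tanh (γ * x) * Real.tanh (γ * y) := by
        have := abs_mul (Real.tanh (γ * x)) (Real.tanh (γ * y))
        have a1 := (Real.abs_tanh_lt_one (γ * x)).le
        have a2 := (Real.abs_tanh_lt_one (γ * y)).le
        have : |Real.tanh (γ * x) * Real.tanh (γ * y)| ≤ 1 := by
          rw [this]; exact mul_le_one₀ a1 (abs_nonneg _) a2
        exact (abs_le.1 this).1
      have h5 := Real.sinh_lt_cosh s
      apply mul_le_mul
      · apply Real.exp_le_exp.2
        have hn' : (0 : ℝ) ≤ n := by positivity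
        nlinarith
      · apply pow_le_pow_left₀
        · nlinarith
        · rw [hr]; nlinarith
      · apply pow_nonneg; nlinarith
      · positivity)
  have hZ := Z0_lower γ (by linarith) n hn mp
  set K : ℝ := (numOn ε : ℝ) with hK
  have h1 : ∑ σ : TwoConf n, (if (mp / 2 ≤ |mag1 n σ| ∧ mp / 2 ≤ |mag2 n σ| ∧
          mag1 n σ * mag2 n σ < 0) then
        wt0 γ n σ * Real.exp (a * spinX ε σ) else 0) ≤
      Real.exp (-(θ * (a * K))) * (∑ σ : TwoConf n, wt0 γ n σ +
        Real.exp (s * θ) ^ numOn ε * ∑ σ : TwoConf n,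
        (if (mp / 2 ≤ |mag1 n σ| ∧ mp / 2 ≤ |mag2 n σ| ∧
          mag1 n σ * mag2 n σ < 0) then
        wt0 γ n σ * Real.exp (s * spinX ε σ) else 0)) := by
    rw [Finset.mul_sum Finset.univ _ (Real.exp (s * θ) ^ numOn ε), ← Finset.sum_add_distrib,
      Finset.mul_sum]
    apply Finset.sum_le_sum
    intro σ _
    have hw := wt0_pos γ n σ
    split_ifs
    · have e1 : Real.exp (a * spinX ε σ) =
          Real.exp (-(θ * (a * K))) * Real.exp (a * (spinX ε σ + θ * K)) := by
        rw [← Real.exp_add]; congr 1; ring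
      have e2 : Real.exp (s * θ) ^ numOn ε * (wt0 γ n σ * Real.exp (s * spinX ε σ)) =
          wt0 γ n σ * Real.exp (s * (spinX ε σ + θ * K)) := by
        rw [← Real.exp_nat_mul, mul_left_comm, ← Real.exp_add]; congr 2; rw [hK]; ring
      have e3 : Real.exp (a * (spinX ε σ + θ * K)) ≤
          1 + Real.exp (s * (spinX ε σ + θ * K)) := by
        rcases le_total 0 (spinX ε σ + θ * K) with h | h
        · have : Real.exp (a * (spinX ε σ + θ * K)) ≤ Real.exp (s * (spinX ε σ + θ * K)) :=
            Real.exp_le_exp.2 (by gcongr)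
          linarith
        · have : Real.exp (a * (spinX ε σ + θ * K)) ≤ 1 :=
            Real.exp_le_one_iff.2 (mul_nonpos_of_nonneg_of_nonpos ha h)
          have := Real.exp_pos (s * (spinX ε σ + θ * K))
          linarith
      rw [e1, e2]
      calc _ = Real.exp (-(θ * (a * K))) * (wt0 γ n σ * Real.exp (a * (spinX ε σ + θ * K))) := by
            ring
        _ ≤ Real.exp (-(θ * (a * K))) *
            (wt0 γ n σ * (1 + Real.exp (s * (spinX ε σ + θ * K)))) := by gcongr
        _ = _ := by ring
    · positivity
  refine h1.trans ?_
  calc _ ≤ Real.exp (-(θ * (a * K))) * (∑ σ : TwoConf n, wt0 γ n σ +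
        Real.exp (s * θ) ^ numOn ε *
          ((n + 1) ^ 2 * (Real.exp (n * (2 * rateG γ mp)) * r ^ numOn ε))) := by
        gcongr
        refine le_trans (le_of_eq ?_) h0
        congr!
    _ ≤ Real.exp (-(θ * (a * K))) * (∑ σ : TwoConf n, wt0 γ n σ +
        Real.exp (s * θ) ^ numOn ε *
          ((n + 1) ^ 2 * ((∑ σ : TwoConf n, wt0 γ n σ) * r ^ numOn ε))) := by gcongr
    _ = _ := by rw [mul_pow]; ring

open Classical in
lemma avg_bound {ι : Type*} [Fintype ι] (w g : ι → ℝ) (bad : ι → Prop) (L η M : ℝ)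
    (hw : ∀ i, 0 ≤ w i) (hη : 0 ≤ η)
    (h1 : ∀ i, ¬ bad i → |g i - L| ≤ η) (h2 : ∀ i, |g i - L| ≤ M) :
    |∑ i, (g i - L) * w i| ≤ η * ∑ i, w i + M * ∑ i, (if bad i then w i else 0) := by
  refine (Finset.abs_sum_le_sum_abs _ _).trans ?_
  rw [Finset.mul_sum, Finset.mul_sum, ← Finset.sum_add_distrib]
  apply Finset.sum_le_sum
  intro i _
  rw [abs_mul, abs_of_nonneg (hw i)]
  have := hw i
  split_ifs with h
  · have := h2 i
    have : |g i - L| * w i ≤ M * w i := by gcongr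
    have : 0 ≤ η * w i := by positivity
    linarith
  · have := h1 i h
    have : |g i - L| * w i ≤ η * w i := by gcongr
    linarith

/-- Gibbs average of a function of the magnetizations. -/
def gibbsAvg (γ : ℝ) (n : ℕ) (a : ℝ) (ε : Fin n → Bool) (f : ℝ × ℝ → ℝ) : ℝ :=
  (∑ σ : TwoConf n, f (mag1 n σ, mag2 n σ) * (wt0 γ n σ * Real.exp (a * spinX ε σ))) /
    ∑ σ : TwoConf n, wt0 γ n σ * Real.exp (a * spinX ε σ)

lemma Z0_pos (γ : ℝ) (n : ℕ) : 0 < ∑ σ : TwoConf n, wt0 γ n σ :=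
  Finset.sum_pos (fun σ _ => wt0_pos γ n σ) Finset.univ_nonempty

lemma Z_pos (γ : ℝ) (n : ℕ) (a : ℝ) (ε : Fin n → Bool) :
    0 < ∑ σ : TwoConf n, wt0 γ n σ * Real.exp (a * spinX ε σ) :=
  (Z0_pos γ n).trans_le (Z_ge γ n a ε)

lemma integral_dil (n : ℕ) (hn : 0 < n) (α β : ℝ) (ε : Fin n → Bool)
    (f : BoundedContinuousFunction (ℝ × ℝ) ℝ) :
    ∫ x, f x ∂(dilMagDist n α β ε) = gibbsAvg (β / 2) n α ε f := by
  rw [dilMagDist, integral_smul_measure, integral_finsetSum_measure]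
  · simp_rw [integral_smul_measure, integral_dirac, ENNReal.toReal_ofReal (Real.exp_pos _).le]
    rw [gibbsAvg, ENNReal.toReal_inv, ← ENNReal.ofReal_sum_of_nonneg
      (fun σ _ => (Real.exp_pos _).le), ENNReal.toReal_ofReal
      (Finset.sum_nonneg fun σ _ => (Real.exp_pos _).le)]
    simp_rw [dilH_eq n hn, smul_eq_mul]
    rw [inv_mul_eq_div]
    congr 1
    exact Finset.sum_congr rfl fun σ _ => by ring
  · intro σ _
    apply Integrable.smul_measure _ ENNReal.ofReal_ne_top
    exact f.integrable _

lemma tendsto_poly_exp (κ : ℝ) (hκ : 0 < κ) :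
    Tendsto (fun n : ℕ => ((n : ℝ) + 1) ^ 2 * Real.exp (-κ * n)) atTop (nhds 0) := by
  have h1 : |Real.exp (-κ)| < 1 := by
    rw [abs_of_pos (Real.exp_pos _)]; simpa using hκ
  have h2 := ((tendsto_pow_const_mul_const_pow_of_abs_lt_one 2 h1).comp
    (tendsto_add_atTop_nat 1)).mul_const (Real.exp κ)
  rw [zero_mul] at h2
  refine h2.congr fun n => ?_
  simp only [Function.comp]
  rw [← Real.exp_nat_mul, mul_assoc, ← Real.exp_add]
  push_cast
  congr 2
  ring

lemma avg_sub (γ : ℝ) (n : ℕ) (a : ℝ) (ε : Fin n → Bool) (f : ℝ × ℝ → ℝ) (L : ℝ) :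
    gibbsAvg γ n a ε f - L =
      (∑ σ : TwoConf n, (f (mag1 n σ, mag2 n σ) - L) * (wt0 γ n σ * Real.exp (a * spinX ε σ))) /
      ∑ σ : TwoConf n, wt0 γ n σ * Real.exp (a * spinX ε σ) := by
  have := (Z_pos γ n a ε).ne'
  rw [gibbsAvg, div_sub' this]
  congr 1
  rw [mul_comm, Finset.mul_sum, ← Finset.sum_sub_distrib]
  exact Finset.sum_congr rfl fun σ _ => by ring

lemma sym_two (γ : ℝ) (n : ℕ) (a : ℝ) (ε : Fin n → Bool) (f : ℝ → ℝ → ℝ) :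
    ∑ σ : TwoConf n, f (mag1 n σ) (mag2 n σ) * (wt0 γ n σ * Real.exp (a * spinX ε σ)) =
    ∑ σ : TwoConf n, ((f (mag1 n σ) (mag2 n σ) + f (-mag1 n σ) (-mag2 n σ)) / 2) *
      (wt0 γ n σ * Real.exp (a * spinX ε σ)) := by
  have h := Equiv.sum_comp ((flip1 n).trans (flip2 n))
    (fun σ => f (mag1 n σ) (mag2 n σ) * (wt0 γ n σ * Real.exp (a * spinX ε σ)))
  simp only [Equiv.trans_apply, mag1_flip2, mag2_flip2, mag1_flip1, mag2_flip1, wt0_flip1,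
    wt0_flip2, spinX_flip1, spinX_flip2, neg_neg] at h
  have e : ∀ σ : TwoConf n, ((f (mag1 n σ) (mag2 n σ) + f (-mag1 n σ) (-mag2 n σ)) / 2) *
      (wt0 γ n σ * Real.exp (a * spinX ε σ)) =
      (1 / 2) * (f (mag1 n σ) (mag2 n σ) * (wt0 γ n σ * Real.exp (a * spinX ε σ))) +
      (1 / 2) * (f (-mag1 n σ) (-mag2 n σ) * (wt0 γ n σ * Real.exp (a * spinX ε σ))) :=
    fun σ => by ring
  simp_rw [e]
  rw [Finset.sum_add_distrib, ← Finset.mul_sum, ← Finset.mul_sum, h]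
  ring

lemma sym_four (γ : ℝ) (n : ℕ) (f : ℝ → ℝ → ℝ) :
    ∑ σ : TwoConf n, f (mag1 n σ) (mag2 n σ) * wt0 γ n σ =
    ∑ σ : TwoConf n, ((f (mag1 n σ) (mag2 n σ) + f (mag1 n σ) (-mag2 n σ) +
      f (-mag1 n σ) (mag2 n σ) + f (-mag1 n σ) (-mag2 n σ)) / 4) * wt0 γ n σ := by
  have h1 := Equiv.sum_comp ((flip1 n).trans (flip2 n))
    (fun σ => f (mag1 n σ) (mag2 n σ) * wt0 γ n σ)
  have h2 := Equiv.sum_comp (flip1 n)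
    (fun σ => f (mag1 n σ) (mag2 n σ) * wt0 γ n σ)
  have h3 := Equiv.sum_comp (flip2 n)
    (fun σ => f (mag1 n σ) (mag2 n σ) * wt0 γ n σ)
  simp only [Equiv.trans_apply, mag1_flip2, mag2_flip2, mag1_flip1, mag2_flip1, wt0_flip1,
    wt0_flip2] at h1 h2 h3
  have e : ∀ σ : TwoConf n, ((f (mag1 n σ) (mag2 n σ) + f (mag1 n σ) (-mag2 n σ) +
      f (-mag1 n σ) (mag2 n σ) + f (-mag1 n σ) (-mag2 n σ)) / 4) * wt0 γ n σ =
      (1 / 4) * (f (mag1 n σ) (mag2 n σ) * wt0 γ n σ) +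
      (1 / 4) * (f (mag1 n σ) (-mag2 n σ) * wt0 γ n σ) +
      (1 / 4) * (f (-mag1 n σ) (mag2 n σ) * wt0 γ n σ) +
      (1 / 4) * (f (-mag1 n σ) (-mag2 n σ) * wt0 γ n σ) :=
    fun σ => by ring
  simp_rw [e]
  rw [Finset.sum_add_distrib, Finset.sum_add_distrib, Finset.sum_add_distrib, ← Finset.mul_sum,
    ← Finset.mul_sum, ← Finset.mul_sum, ← Finset.mul_sum, h1, h2, h3]
  ring

lemma abs_exp_sub_one_le' (x : ℝ) : |Real.exp x - 1| ≤ Real.exp |x| - 1 := by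
  rcases le_total 0 x with h | h
  · rw [abs_of_nonneg h, abs_of_nonneg]
    have := Real.one_le_exp h
    linarith
  · rw [abs_of_nonpos h, abs_of_nonpos]
    · have := Real.add_one_le_exp x
      have h1 := Real.exp_pos x
      have h2 : Real.exp x * Real.exp (-x) = 1 := by rw [← Real.exp_add]; simp
      have h3 := Real.exp_pos (-x)
      nlinarith [sq_nonneg (Real.exp x - 1), sq_nonneg (Real.exp (-x) - 1)]
    · have := Real.exp_le_one_iff.2 h
      linarith

lemma exists_delta (F : ℝ → ℝ → ℝ) (hF : Continuous fun z : ℝ × ℝ => F z.1 z.2) (mp η : ℝ)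
    (hmp : 0 < mp) (hη : 0 < η) :
    ∃ δ > 0, δ ≤ mp / 2 ∧ ∀ x y, |x - mp| < δ → |y - mp| < δ → |F x y - F mp mp| ≤ η := by
  have := Metric.continuousAt_iff.1 (hF.continuousAt (x := (mp, mp))) η hη
  obtain ⟨δ, hδ, h⟩ := this
  refine ⟨min δ (mp / 2), by positivity, min_le_right _ _, fun x y hx hy => ?_⟩
  have hd : dist (x, y) (mp, mp) < δ := by
    rw [Prod.dist_eq]
    simp only [Real.dist_eq]
    exact max_lt (hx.trans_le (min_le_left _ _)) (hy.trans_le (min_le_left _ _))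
  exact (h hd).le

lemma bcf_abs (f : BoundedContinuousFunction (ℝ × ℝ) ℝ) (z : ℝ × ℝ) :
    -‖f‖ ≤ f z ∧ f z ≤ ‖f‖ := by
  have := f.norm_coe_le_norm z
  rw [Real.norm_eq_abs] at this
  exact abs_le.1 this

open Classical in
lemma lim_case2 (γ : ℝ) (hγ : 1 < γ) (mp : ℝ) (hmp : 0 < mp)
    (hfix : mp = Real.tanh (γ * mp)) (a : ℕ → ℝ) (ha : ∀ n, 0 < a n)
    (ε : ∀ n : ℕ, Fin n → Bool)
    (hlim : Tendsto (fun n => a n * numOn (ε n)) atTop (nhds 0))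
    (f : BoundedContinuousFunction (ℝ × ℝ) ℝ) :
    Tendsto (fun n => gibbsAvg γ n (a n) (ε n) f) atTop
      (nhds ((f (mp, mp) + f (mp, -mp) + f (-mp, mp) + f (-mp, -mp)) / 4)) := by
  set F : ℝ → ℝ → ℝ := fun x y => (f (x, y) + f (x, -y) + f (-x, y) + f (-x, -y)) / 4 with hFdef
  have hFc : Continuous fun z : ℝ × ℝ => F z.1 z.2 := by
    simp only [hFdef]; fun_prop
  have hFabs : ∀ x y, F |x| |y| = F x y := by
    intro x y
    rcases abs_choice x with h | h <;> rcases abs_choice y with h' | h' <;>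
      simp only [hFdef, h, h', neg_neg] <;> ring
  change Tendsto _ _ (nhds (F mp mp))
  set L := F mp mp with hL
  set M := 2 * ‖f‖ with hM
  have hM0 : 0 ≤ M := by positivity
  have hLb : -‖f‖ ≤ L ∧ L ≤ ‖f‖ := by
    simp only [hL, hFdef]
    constructor <;> linarith [bcf_abs f (mp, mp), bcf_abs f (mp, -mp), bcf_abs f (-mp, mp),
      bcf_abs f (-mp, -mp)]
  have hfL : ∀ z, |f z - L| ≤ M := by
    intro z
    have := bcf_abs f z
    rw [abs_le]; constructor <;> linarith [this.1, this.2, hLb.1, hLb.2]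
  have hFL : ∀ x y, |F x y - L| ≤ M := by
    intro x y
    have h1 := bcf_abs f (x, y)
    have h2 := bcf_abs f (x, -y)
    have h3 := bcf_abs f (-x, y)
    have h4 := bcf_abs f (-x, -y)
    simp only [hFdef]
    rw [abs_le]
    constructor <;> linarith [h1.1, h1.2, h2.1, h2.2, h3.1, h3.2, h4.1, h4.2, hLb.1, hLb.2]
  rw [Metric.tendsto_atTop']
  intro e he
  obtain ⟨δ, hδ, hδ2, hnear⟩ := exists_delta F hFc mp (e / 2) hmp (by positivity)
  obtain ⟨κ, hκ, hbad⟩ := bad1_bound γ hγ mp hmp hfix δ hδ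
  have hsmall : Tendsto (fun n : ℕ => M * (((n : ℝ) + 1) ^ 2 * Real.exp (-κ * n)) +
      M * (Real.exp (a n * numOn (ε n)) - 1)) atTop (nhds 0) := by
    have h1 := (tendsto_poly_exp κ hκ).const_mul M
    have h2 := (((Real.continuous_exp.tendsto 0).comp hlim).sub_const 1).const_mul M
    simpa using h1.add h2
  have hev := (hsmall.eventually (eventually_lt_nhds (show (0 : ℝ) < e / 2 by positivity))).and
    (eventually_gt_atTop 0)
  obtain ⟨N, hN⟩ := eventually_atTop.1 hev
  refine ⟨N, fun n hn => ?_⟩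
  obtain ⟨hn1, hn0⟩ := hN n hn.le
  rw [Real.dist_eq, avg_sub]
  have hZ := Z_pos γ n (a n) (ε n)
  have hZ0 := Z0_pos γ n
  rw [abs_div, abs_of_pos hZ, div_lt_iff₀ hZ]
  have hb := hbad n hn0 0 le_rfl (ε n)
  simp only [zero_mul, Real.exp_zero, mul_one, zero_sub] at hb
  have s1 := avg_bound (fun σ : TwoConf n => wt0 γ n σ)
    (fun σ => F (mag1 n σ) (mag2 n σ))
    (fun σ => δ ≤ |(|mag1 n σ| - mp)| ∨ δ ≤ |(|mag2 n σ| - mp)|) L (e / 2) M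
    (fun σ => (wt0_pos γ n σ).le) (by positivity)
    (by
      intro σ hσ
      push Not at hσ
      rw [← hFabs]
      exact hnear _ _ hσ.1 hσ.2) (fun σ => hFL _ _)
  have s2 : ∑ σ : TwoConf n, (f (mag1 n σ, mag2 n σ) - L) * wt0 γ n σ =
      ∑ σ : TwoConf n, (F (mag1 n σ) (mag2 n σ) - L) * wt0 γ n σ := by
    have h := sym_four γ n (fun x y => f (x, y) - L)
    rw [h]
    refine Finset.sum_congr rfl fun σ _ => ?_
    simp only [hFdef]; ring
  have s3 : |∑ σ : TwoConf n, (f (mag1 n σ, mag2 n σ) - L) *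
      (wt0 γ n σ * (Real.exp (a n * spinX (ε n) σ) - 1))| ≤
      M * (Real.exp (a n * numOn (ε n)) - 1) * ∑ σ : TwoConf n, wt0 γ n σ := by
    refine (Finset.abs_sum_le_sum_abs _ _).trans ?_
    rw [Finset.mul_sum]
    refine Finset.sum_le_sum fun σ _ => ?_
    rw [abs_mul, abs_mul, abs_of_pos (wt0_pos γ n σ)]
    have h1 : |Real.exp (a n * spinX (ε n) σ) - 1| ≤ Real.exp (a n * numOn (ε n)) - 1 := by
      refine (abs_exp_sub_one_le' _).trans ?_
      gcongr
      rw [abs_mul, abs_of_pos (ha n)]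
      have := abs_spinX_le n (ε n) σ
      have := ha n
      gcongr
    have h2 := hfL (mag1 n σ, mag2 n σ)
    have h3 := (wt0_pos γ n σ).le
    calc _ ≤ M * (wt0 γ n σ * (Real.exp (a n * numOn (ε n)) - 1)) := by gcongr
      _ = _ := by ring
  have s4 : ∑ σ : TwoConf n, (f (mag1 n σ, mag2 n σ) - L) *
      (wt0 γ n σ * Real.exp (a n * spinX (ε n) σ)) =
      ∑ σ : TwoConf n, (f (mag1 n σ, mag2 n σ) - L) * wt0 γ n σ +
      ∑ σ : TwoConf n, (f (mag1 n σ, mag2 n σ) - L) *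
      (wt0 γ n σ * (Real.exp (a n * spinX (ε n) σ) - 1)) := by
    rw [← Finset.sum_add_distrib]
    exact Finset.sum_congr rfl fun σ _ => by ring
  have s5 := Z_ge γ n (a n) (ε n)
  rw [s4, s2]
  set Z0 := ∑ σ : TwoConf n, wt0 γ n σ
  set Z := ∑ σ : TwoConf n, wt0 γ n σ * Real.exp (a n * spinX (ε n) σ)
  have s6 := mul_le_mul_of_nonneg_left hb hM0
  have s7 : (M * (((n : ℝ) + 1) ^ 2 * Real.exp (-κ * n)) +
      M * (Real.exp (a n * numOn (ε n)) - 1)) * Z0 < e / 2 * Z0 := by gcongr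
  have s8 : e * Z0 ≤ e * Z := by gcongr
  refine (abs_add_le _ _).trans_lt ?_
  refine lt_of_lt_of_le ?_ s8
  have s1' : |∑ σ : TwoConf n, (F (mag1 n σ) (mag2 n σ) - L) * wt0 γ n σ| ≤
      e / 2 * Z0 + M * (((n : ℝ) + 1) ^ 2 * Real.exp (-κ * n) * Z0) := by
    refine le_trans (s1.trans (le_of_eq ?_)) (add_le_add_right s6 (e / 2 * Z0))
    congr!
  have := add_le_add s1' s3
  refine this.trans_lt ?_
  linarith

open Classical in
lemma lim_case1 (γ : ℝ) (hγ : 1 < γ) (mp : ℝ) (hmp : 0 < mp)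
    (hfix : mp = Real.tanh (γ * mp)) :
    ∃ ρ > 0, ρ < 1 ∧ ∀ (a : ℕ → ℝ) (_ : ∀ n, 0 < a n) (_ : Tendsto a atTop (nhds 0))
    (ε : ∀ n : ℕ, Fin n → Bool)
    (_ : Tendsto (fun n => a n * numOn (ε n)) atTop atTop)
    (_ : Tendsto (fun n : ℕ => ((n : ℝ) + 1) ^ 2 * ρ ^ numOn (ε n)) atTop (nhds 0))
    (f : BoundedContinuousFunction (ℝ × ℝ) ℝ),
    Tendsto (fun n => gibbsAvg γ n (a n) (ε n) f) atTop
      (nhds ((f (mp, mp) + f (-mp, -mp)) / 2)) := by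
  obtain ⟨s, hs, θ, hθ, ρ, hρ0, hρ1, hbad2⟩ := bad2_bound γ hγ mp hmp hfix
  refine ⟨ρ, hρ0, hρ1, ?_⟩
  intro a ha ha0 ε hlim hlog f
  set F : ℝ → ℝ → ℝ := fun x y => (f (x, y) + f (-x, -y)) / 2 with hFdef
  have hFc : Continuous fun z : ℝ × ℝ => F z.1 z.2 := by
    simp only [hFdef]; fun_prop
  have hFneg : ∀ x y, F (-x) (-y) = F x y := by
    intro x y
    simp only [hFdef, neg_neg]; ring
  change Tendsto _ _ (nhds (F mp mp))
  set L := F mp mp with hL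
  set M := 2 * ‖f‖ with hM
  have hM0 : 0 ≤ M := by positivity
  have hLb : -‖f‖ ≤ L ∧ L ≤ ‖f‖ := by
    simp only [hL, hFdef]
    constructor <;> linarith [bcf_abs f (mp, mp), bcf_abs f (-mp, -mp)]
  have hFL : ∀ x y, |F x y - L| ≤ M := by
    intro x y
    have h1 := bcf_abs f (x, y)
    have h4 := bcf_abs f (-x, -y)
    simp only [hFdef]
    rw [abs_le]
    constructor <;> linarith [h1.1, h1.2, h4.1, h4.2, hLb.1, hLb.2]
  rw [Metric.tendsto_atTop']
  intro e he
  obtain ⟨δ, hδ, hδ2, hnear⟩ := exists_delta F hFc mp (e / 2) hmp (by positivity)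
  obtain ⟨κ, hκ, hbad⟩ := bad1_bound γ hγ mp hmp hfix δ hδ
  have hsmall : Tendsto (fun n : ℕ => M * (((n : ℝ) + 1) ^ 2 * Real.exp (-(κ / 2) * n)) +
      M * (Real.exp (-(θ * (a n * numOn (ε n)))) *
        (1 + (n + 1) ^ 2 * ρ ^ numOn (ε n)))) atTop (nhds 0) := by
    have h1 := (tendsto_poly_exp (κ / 2) (by positivity)).const_mul M
    have h2 := (Real.tendsto_exp_neg_atTop_nhds_zero.comp (hlim.const_mul_atTop hθ)).mul
      (hlog.const_add 1)
    have h3 := h2.const_mul M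
    simpa using h1.add h3
  have hev := ((hsmall.eventually (eventually_lt_nhds (show (0 : ℝ) < e / 2 by positivity))).and
    (eventually_gt_atTop 0)).and ((ha0.eventually (eventually_lt_nhds hs)).and
    (ha0.eventually (eventually_lt_nhds (show (0 : ℝ) < κ / 2 by positivity))))
  obtain ⟨N, hN⟩ := eventually_atTop.1 hev
  refine ⟨N, fun n hn => ?_⟩
  obtain ⟨⟨hn1, hn0⟩, hn2, hn3⟩ := hN n hn.le
  rw [Real.dist_eq, avg_sub]
  have hZ := Z_pos γ n (a n) (ε n)
  have hZ0 := Z0_pos γ n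
  rw [abs_div, abs_of_pos hZ, div_lt_iff₀ hZ]
  have hb := hbad n hn0 (a n) (ha n).le (ε n)
  have hb2 := hbad2 n hn0 (a n) (ha n).le hn2.le (ε n)
  have hwpos : ∀ σ : TwoConf n, 0 ≤ wt0 γ n σ * Real.exp (a n * spinX (ε n) σ) :=
    fun σ => mul_nonneg (wt0_pos γ n σ).le (Real.exp_pos _).le
  have s1 := avg_bound (fun σ : TwoConf n => wt0 γ n σ * Real.exp (a n * spinX (ε n) σ))
    (fun σ => F (mag1 n σ) (mag2 n σ))
    (fun σ => (δ ≤ |(|mag1 n σ| - mp)| ∨ δ ≤ |(|mag2 n σ| - mp)|) ∨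
      (mp / 2 ≤ |mag1 n σ| ∧ mp / 2 ≤ |mag2 n σ| ∧ mag1 n σ * mag2 n σ < 0)) L (e / 2) M
    hwpos (by positivity)
    (by
      intro σ hσ
      rw [not_or, not_or] at hσ
      obtain ⟨⟨hx, hy⟩, hxy⟩ := hσ
      set x := mag1 n σ
      set y := mag2 n σ
      push Not at hx hy
      have hx1 : mp / 2 ≤ |x| := by linarith [(abs_lt.1 hx).1]
      have hy1 : mp / 2 ≤ |y| := by linarith [(abs_lt.1 hy).1]
      have hxy' : 0 ≤ x * y := by
        by_contra hcon
        exact hxy ⟨hx1, hy1, by linarith⟩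
      rcases le_total 0 x with h0 | h0
      · have hx0 : 0 < x := by
          rw [abs_of_nonneg h0] at hx1; linarith
        have hy0 : 0 ≤ y := by
          by_contra hc; push Not at hc; nlinarith
        rw [abs_of_nonneg h0] at hx
        rw [abs_of_nonneg hy0] at hy
        exact hnear x y hx hy
      · have hx0 : x < 0 := by
          rw [abs_of_nonpos h0] at hx1; linarith
        have hy0 : y ≤ 0 := by
          by_contra hc; push Not at hc; nlinarith
        rw [abs_of_nonpos h0] at hx
        rw [abs_of_nonpos hy0] at hy
        rw [← hFneg]
        exact hnear (-x) (-y) hx hy) (fun σ => hFL _ _)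
  have s2 : ∑ σ : TwoConf n, (f (mag1 n σ, mag2 n σ) - L) *
      (wt0 γ n σ * Real.exp (a n * spinX (ε n) σ)) =
      ∑ σ : TwoConf n, (F (mag1 n σ) (mag2 n σ) - L) *
      (wt0 γ n σ * Real.exp (a n * spinX (ε n) σ)) := by
    have h := sym_two γ n (a n) (ε n) (fun x y => f (x, y) - L)
    rw [h]
    refine Finset.sum_congr rfl fun σ _ => ?_
    simp only [hFdef]; ring
  have s3 : ∑ σ : TwoConf n, (if ((δ ≤ |(|mag1 n σ| - mp)| ∨ δ ≤ |(|mag2 n σ| - mp)|) ∨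
      (mp / 2 ≤ |mag1 n σ| ∧ mp / 2 ≤ |mag2 n σ| ∧ mag1 n σ * mag2 n σ < 0)) then
      wt0 γ n σ * Real.exp (a n * spinX (ε n) σ) else 0) ≤
      ∑ σ : TwoConf n, (if (δ ≤ |(|mag1 n σ| - mp)| ∨ δ ≤ |(|mag2 n σ| - mp)|) then
        wt0 γ n σ * Real.exp (a n * spinX (ε n) σ) else 0) +
      ∑ σ : TwoConf n, (if (mp / 2 ≤ |mag1 n σ| ∧ mp / 2 ≤ |mag2 n σ| ∧
          mag1 n σ * mag2 n σ < 0) then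
        wt0 γ n σ * Real.exp (a n * spinX (ε n) σ) else 0) := by
    rw [← Finset.sum_add_distrib]
    refine Finset.sum_le_sum fun σ _ => ?_
    have := hwpos σ
    by_cases h1 : (δ ≤ |(|mag1 n σ| - mp)| ∨ δ ≤ |(|mag2 n σ| - mp)|)
    · rw [if_pos (Or.inl h1), if_pos h1]
      split_ifs <;> linarith
    · by_cases h2 : (mp / 2 ≤ |mag1 n σ| ∧ mp / 2 ≤ |mag2 n σ| ∧ mag1 n σ * mag2 n σ < 0)
      · rw [if_pos (Or.inr h2), if_neg h1, if_pos h2]; linarith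
      · rw [if_neg (by tauto), if_neg h1, if_neg h2]; linarith
  have s5 := Z_ge γ n (a n) (ε n)
  rw [s2]
  have hexp : Real.exp ((a n - κ) * n) ≤ Real.exp (-(κ / 2) * n) := by
    apply Real.exp_le_exp.2
    have : (0 : ℝ) ≤ n := by positivity
    gcongr
    linarith
  set Z0 := ∑ σ : TwoConf n, wt0 γ n σ
  set Z := ∑ σ : TwoConf n, wt0 γ n σ * Real.exp (a n * spinX (ε n) σ)
  have s4 := s3.trans (add_le_add hb hb2)
  have s4' : ((n : ℝ) + 1) ^ 2 * Real.exp ((a n - κ) * n) * Z0 ≤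
      ((n : ℝ) + 1) ^ 2 * Real.exp (-(κ / 2) * n) * Z0 := by gcongr
  have s6 := mul_le_mul_of_nonneg_left (s4.trans (add_le_add_left s4' _)) hM0
  have s7 : (M * (((n : ℝ) + 1) ^ 2 * Real.exp (-(κ / 2) * n)) +
      M * (Real.exp (-(θ * (a n * numOn (ε n)))) *
        (1 + (n + 1) ^ 2 * ρ ^ numOn (ε n)))) * Z0 < e / 2 * Z0 := by gcongr
  have s8 : e / 2 * Z0 ≤ e / 2 * Z := by gcongr
  have s1' : |∑ σ : TwoConf n, (F (mag1 n σ) (mag2 n σ) - L) *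
      (wt0 γ n σ * Real.exp (a n * spinX (ε n) σ))| ≤ e / 2 * Z + M *
      ∑ σ : TwoConf n, (if ((δ ≤ |(|mag1 n σ| - mp)| ∨ δ ≤ |(|mag2 n σ| - mp)|) ∨
      (mp / 2 ≤ |mag1 n σ| ∧ mp / 2 ≤ |mag2 n σ| ∧ mag1 n σ * mag2 n σ < 0)) then
      wt0 γ n σ * Real.exp (a n * spinX (ε n) σ) else 0) := by
    refine s1.trans (le_of_eq ?_)
    congr!
  refine s1'.trans_lt ?_
  linarith

lemma bern_mgf (n : ℕ) (q l : ℝ) :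
    ∑ ε : Fin n → Bool, (∏ i, if ε i then q else 1 - q) * Real.exp (l * numOn ε) =
      (1 - q + q * Real.exp l) ^ n := by
  have e : ∀ ε : Fin n → Bool, (∏ i, if ε i then q else 1 - q) * Real.exp (l * numOn ε) =
      ∏ i, (if ε i then q * Real.exp l else 1 - q) := by
    intro ε
    have : Real.exp (l * numOn ε) = ∏ i, (if ε i then Real.exp l else 1) := by
      rw [mul_comm, Real.exp_nat_mul, numOn, ← Finset.prod_const, Finset.prod_filter]
    rw [this, ← Finset.prod_mul_distrib]
    refine Finset.prod_congr rfl fun i _ => ?_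
    split_ifs <;> simp
  simp_rw [e]
  have h := Finset.prod_univ_sum (fun _ : Fin n => (Finset.univ : Finset Bool))
    (fun _ b => if b then q * Real.exp l else 1 - q)
  rw [Fintype.piFinset_univ] at h
  rw [← h]
  simp
  ring

lemma bern_apply_le (n : ℕ) (q : ℝ) (hq : q ∈ Set.Ioc (0 : ℝ) 1) (A : Set (Fin n → Bool))
    (l c : ℝ) (hA : ∀ ε ∈ A, c ≤ l * numOn ε) :
    bernMeasure n q A ≤ ENNReal.ofReal (Real.exp (n * q * (Real.exp l - 1) - c)) := by
  have hw : ∀ ε : Fin n → Bool, 0 ≤ (∏ i, if ε i then q else 1 - q) := by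
    intro ε
    apply Finset.prod_nonneg
    intro i _
    split_ifs <;> linarith [hq.1, hq.2]
  rw [bernMeasure, Measure.finsetSum_apply]
  calc _ ≤ ∑ ε : Fin n → Bool, ENNReal.ofReal ((∏ i, if ε i then q else 1 - q) *
        (Real.exp (l * numOn ε) * Real.exp (-c))) := by
        apply Finset.sum_le_sum
        intro ε _
        rw [Measure.smul_apply, smul_eq_mul, ENNReal.ofReal_mul (hw ε)]
        gcongr
        rw [Measure.dirac_apply' _ (Set.toFinite A).measurableSet]
        by_cases h : ε ∈ A
        · rw [Set.indicator_of_mem h, ← Real.exp_add, Pi.one_apply, ← ENNReal.ofReal_one]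
          apply ENNReal.ofReal_le_ofReal
          have := hA ε h
          exact Real.one_le_exp (by linarith)
        · rw [Set.indicator_of_notMem h]; simp
    _ = ENNReal.ofReal ((1 - q + q * Real.exp l) ^ n * Real.exp (-c)) := by
        rw [← ENNReal.ofReal_sum_of_nonneg]
        · congr 1
          rw [← bern_mgf, Finset.sum_mul]
          exact Finset.sum_congr rfl fun ε _ => by ring
        · intro ε _
          have := hw ε
          positivity
    _ ≤ _ := by
        apply ENNReal.ofReal_le_ofReal
        rw [show (n : ℝ) * q * (Real.exp l - 1) - c = n * (q * (Real.exp l - 1)) + -c by ring,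
          Real.exp_add, Real.exp_nat_mul]
        gcongr
        · have := Real.exp_pos l
          have := hq.1
          have := hq.2
          have : 0 < q * Real.exp l := by positivity
          linarith
        · have := Real.add_one_le_exp (q * (Real.exp l - 1))
          linarith

lemma bern_univ (n : ℕ) (q : ℝ) (hq : q ∈ Set.Ioc (0 : ℝ) 1) : bernMeasure n q ≠ 0 := by
  intro h
  have h1 : bernMeasure n q Set.univ = 1 := by
    rw [bernMeasure, Measure.finsetSum_apply]
    simp only [Measure.smul_apply, smul_eq_mul, measure_univ, mul_one]
    rw [← ENNReal.ofReal_sum_of_nonneg]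
    · have := bern_mgf n q 0
      simp only [zero_mul, Real.exp_zero, mul_one] at this
      rw [this]; simp
    · intro ε _
      apply Finset.prod_nonneg
      intro i _
      split_ifs <;> linarith [hq.1, hq.2]
  rw [h] at h1
  simp at h1

lemma bern_dev (n : ℕ) (q : ℝ) (hq : q ∈ Set.Ioc (0 : ℝ) 1) :
    bernMeasure n q {ε | ¬ (n * q / 2 ≤ (numOn ε : ℝ) ∧ (numOn ε : ℝ) ≤ 3 * (n * q))} ≤
      ENNReal.ofReal (2 * Real.exp (-(n * q / 10))) := by
  have hsub : {ε : Fin n → Bool | ¬ (n * q / 2 ≤ (numOn ε : ℝ) ∧ (numOn ε : ℝ) ≤ 3 * (n * q))} ⊆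
      {ε | (numOn ε : ℝ) ≤ n * q / 2} ∪ {ε | 3 * (n * q) ≤ (numOn ε : ℝ)} := by
    intro ε hε
    simp only [Set.mem_setOf_eq, not_and_or, not_le] at hε
    rcases hε with h | h
    · exact Or.inl h.le
    · exact Or.inr h.le
  have hnq : 0 ≤ n * q := mul_nonneg (by positivity) hq.1.le
  refine (measure_mono hsub).trans ((measure_union_le _ _).trans ?_)
  rw [two_mul, ENNReal.ofReal_add (by positivity) (by positivity)]
  apply add_le_add
  · refine (bern_apply_le n q hq _ (-1) (-(n * q / 2)) ?_).trans ?_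
    · intro ε hε
      have : (numOn ε : ℝ) ≤ n * q / 2 := hε
      linarith
    · apply ENNReal.ofReal_le_ofReal
      apply Real.exp_le_exp.2
      have := Real.exp_neg_one_lt_d9
      nlinarith
  · refine (bern_apply_le n q hq _ 1 (3 * (n * q)) ?_).trans ?_
    · intro ε hε
      have : 3 * (n * q) ≤ (numOn ε : ℝ) := hε
      linarith
    · apply ENNReal.ofReal_le_ofReal
      apply Real.exp_le_exp.2
      have := Real.exp_one_lt_d9
      nlinarith

lemma log_lower (C : ℝ) (p : ℕ → ℝ)
    (hlog : ∀ᶠ N : ℕ in atTop, C * Real.log N ≤ (N : ℝ) * p N) :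
    ∀ᶠ n : ℕ in atTop, C / 2 * Real.log (2 * n) ≤ n * p (2 * n) := by
  have ht : Tendsto (fun n : ℕ => 2 * n) atTop atTop :=
    tendsto_id.const_mul_atTop' (by norm_num)
  filter_upwards [ht.eventually hlog] with n hn
  push_cast at hn
  linarith

lemma ae_count (C : ℝ) (hC : 40 ≤ C) (p : ℕ → ℝ) (hp : ∀ N, p N ∈ Set.Ioc (0 : ℝ) 1)
    (hlog : ∀ᶠ N : ℕ in atTop, C * Real.log N ≤ (N : ℝ) * p N)
    (Ω : Type) [MeasurableSpace Ω] (P : Measure Ω) (E : Ω → (n : ℕ) → Fin n → Bool)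
    (hE : ∀ n : ℕ, Measure.map (fun ω => E ω n) P = bernMeasure n (p (2 * n))) :
    ∀ᵐ ω ∂P, ∀ᶠ n : ℕ in atTop, n * p (2 * n) / 2 ≤ (numOn (E ω n) : ℝ) ∧
      (numOn (E ω n) : ℝ) ≤ 3 * (n * p (2 * n)) := by
  obtain ⟨N0, hN0⟩ := eventually_atTop.1 ((log_lower C p hlog).and (eventually_gt_atTop 0))
  set s : ℕ → Set Ω := fun n => {ω | N0 ≤ n ∧ ¬ (n * p (2 * n) / 2 ≤ (numOn (E ω n) : ℝ) ∧
      (numOn (E ω n) : ℝ) ≤ 3 * (n * p (2 * n)))} with hs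
  have hbound : ∀ n, P (s n) ≤ ENNReal.ofReal (2 * (1 / (n : ℝ) ^ 2)) := by
    intro n
    by_cases hn : N0 ≤ n
    · obtain ⟨h1, h2⟩ := hN0 n hn
      have hm : AEMeasurable (fun ω => E ω n) P := by
        by_contra hcon
        have := hE n
        rw [Measure.map_of_not_aemeasurable hcon] at this
        exact bern_univ n _ (hp _) this.symm
      have hset : s n = (fun ω => E ω n) ⁻¹' {ε | ¬ (n * p (2 * n) / 2 ≤ (numOn ε : ℝ) ∧
          (numOn ε : ℝ) ≤ 3 * (n * p (2 * n)))} := by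
        ext ω; simp [hs, hn]
      rw [hset, ← Measure.map_apply_of_aemeasurable hm (Set.toFinite _).measurableSet, hE n]
      refine (bern_dev n _ (hp _)).trans ?_
      apply ENNReal.ofReal_le_ofReal
      have hn1 : (1 : ℝ) ≤ n := by exact_mod_cast h2
      have hl0 : 0 ≤ Real.log (n : ℝ) := Real.log_nonneg hn1
      have hl : Real.log (n : ℝ) ≤ Real.log (2 * n) :=
        Real.log_le_log (by positivity) (by linarith)
      have h3 : -(n * p (2 * n) / 10) ≤ -(2 * Real.log n) := by
        have : 20 * Real.log (2 * n) ≤ C / 2 * Real.log (2 * n) := by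
          gcongr
          · linarith
          · linarith
        linarith
      have h4 : Real.exp (-(2 * Real.log n)) = 1 / (n : ℝ) ^ 2 := by
        rw [Real.exp_neg, one_div, two_mul, Real.exp_add, Real.exp_log (by positivity), sq]
      rw [← h4]
      gcongr
    · have : s n = ∅ := by ext ω; simp [hs, hn]
      rw [this]; simp
  have hsum : ∑' n, P (s n) ≠ ⊤ := by
    refine ne_top_of_le_ne_top ?_ (ENNReal.tsum_le_tsum hbound)
    apply Summable.tsum_ofReal_ne_top
    exact (Real.summable_one_div_nat_pow.2 (by norm_num)).mul_left 2
  filter_upwards [ae_eventually_notMem hsum] with ω hω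
  filter_upwards [hω, eventually_ge_atTop N0] with n h1 h2
  by_contra hcon
  exact h1 ⟨h2, hcon⟩

lemma poly_rho (ρ : ℝ) (hρ0 : 0 < ρ) (hρ1 : ρ < 1) (C : ℝ) (hC : 12 / (-Real.log ρ) ≤ C)
    (q : ℕ → ℝ) (hq : ∀ᶠ n : ℕ in atTop, C / 2 * Real.log (2 * n) ≤ n * q n)
    (K : ℕ → ℕ) (hK : ∀ᶠ n : ℕ in atTop, n * q n / 2 ≤ (K n : ℝ)) :
    Tendsto (fun n : ℕ => ((n : ℝ) + 1) ^ 2 * ρ ^ K n) atTop (nhds 0) := by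
  have hlr : 0 < -Real.log ρ := by have := Real.log_neg hρ0 hρ1; linarith
  have hlim : Tendsto (fun n : ℕ => 4 * (1 / (n : ℝ))) atTop (nhds 0) := by
    simpa using tendsto_one_div_atTop_nhds_zero_nat.const_mul (4 : ℝ)
  refine tendsto_of_tendsto_of_tendsto_of_le_of_le' tendsto_const_nhds hlim
    (Eventually.of_forall fun n => by positivity) ?_
  filter_upwards [hq, hK, eventually_gt_atTop 0] with n h1 h2 h3
  have hn1 : (1 : ℝ) ≤ n := by exact_mod_cast h3
  have hl0 : 0 ≤ Real.log (n : ℝ) := Real.log_nonneg hn1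
  have hl : Real.log (n : ℝ) ≤ Real.log (2 * n) :=
    Real.log_le_log (by positivity) (by linarith)
  rw [div_le_iff₀ hlr] at hC
  have h4 : ρ ^ K n = Real.exp (-((K n : ℝ) * (-Real.log ρ))) := by
    rw [mul_neg, neg_neg, Real.exp_nat_mul, Real.exp_log hρ0]
  have h5 : 3 * Real.log n ≤ (K n : ℝ) * (-Real.log ρ) := by
    have h6 : C / 4 * Real.log (2 * n) ≤ K n := by linarith
    calc 3 * Real.log n ≤ 3 * Real.log (2 * n) := by gcongr
      _ ≤ (C * (-Real.log ρ)) / 4 * Real.log (2 * n) := by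
          gcongr
          · linarith
          · linarith
      _ = (C / 4 * Real.log (2 * n)) * (-Real.log ρ) := by ring
      _ ≤ _ := by gcongr
  have h7 : ρ ^ K n ≤ 1 / (n : ℝ) ^ 3 := by
    rw [h4]
    calc _ ≤ Real.exp (-(3 * Real.log n)) := by gcongr
      _ = _ := by
        rw [Real.exp_neg, one_div]
        congr 1
        have := Real.exp_nat_mul (Real.log n) 3
        push_cast at this
        rw [this, Real.exp_log (by positivity)]
  calc ((n : ℝ) + 1) ^ 2 * ρ ^ K n ≤ (2 * n) ^ 2 * (1 / (n : ℝ) ^ 3) := by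
        gcongr
        linarith
    _ = 4 * (1 / (n : ℝ)) := by
        have : (n : ℝ) ≠ 0 := by positivity
        field_simp
        norm_num

/-- Theorem 2, almost-sure version: if `β > 2` and `α_N ↓ 0`, there is a constant `C > 0`
such that whenever `N p(N) ≥ C log N` for all sufficiently large `N`, then `P`-almost
surely: if `p(N) N α_N → ∞` the distribution of `m^N` under `μ^ε_{N,α_N,β}` converges
weakly to `(1/2)(δ_{(m⁺,m⁺)} + δ_{(m⁻,m⁻)})`, and if `p(N) N α_N → 0` it converges
weakly to `(1/4)(δ_{(m⁺,m⁺)} + δ_{(m⁺,m⁻)} + δ_{(m⁻,m⁺)} + δ_{(m⁻,m⁻)})`. -/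
theorem diluted_limit_almost_surely (β : ℝ) (hβ : 2 < β) (mp : ℝ)
    (hfix : mp = Real.tanh (β / 2 * mp))
    (hmax : ∀ z : ℝ, z = Real.tanh (β / 2 * z) → z ≤ mp)
    (α : ℕ → ℝ) (hαpos : ∀ N, 0 < α N)
    (hα0 : Tendsto α atTop (nhds 0)) :
    ∃ C : ℝ, 0 < C ∧
      ∀ (p : ℕ → ℝ), (∀ N, p N ∈ Set.Ioc (0 : ℝ) 1) →
        (∀ᶠ N : ℕ in atTop, C * Real.log N ≤ (N : ℝ) * p N) →
        ∀ (Ω : Type) [MeasurableSpace Ω] (P : Measure Ω), IsProbabilityMeasure P →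
          ∀ (E : Ω → (n : ℕ) → Fin n → Bool),
            (∀ n : ℕ, Measure.map (fun ω => E ω n) P = bernMeasure n (p (2 * n))) →
            (Tendsto (fun N : ℕ => p N * N * α N) atTop atTop →
              ∀ᵐ ω ∂P, ∀ f : BoundedContinuousFunction (ℝ × ℝ) ℝ,
                Tendsto (fun n : ℕ => ∫ x, f x ∂(dilMagDist n (α (2 * n)) β (E ω n)))
                  atTop
                  (nhds (∫ x, f x ∂((2 : ENNReal)⁻¹ •
                    (Measure.dirac ((mp, mp) : ℝ × ℝ) +
                      Measure.dirac ((-mp, -mp) : ℝ × ℝ)))))) ∧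
            (Tendsto (fun N : ℕ => p N * N * α N) atTop (nhds 0) →
              ∀ᵐ ω ∂P, ∀ f : BoundedContinuousFunction (ℝ × ℝ) ℝ,
                Tendsto (fun n : ℕ => ∫ x, f x ∂(dilMagDist n (α (2 * n)) β (E ω n)))
                  atTop
                  (nhds (∫ x, f x ∂((4 : ENNReal)⁻¹ •
                    (Measure.dirac ((mp, mp) : ℝ × ℝ) + Measure.dirac ((mp, -mp) : ℝ × ℝ) +
                      Measure.dirac ((-mp, mp) : ℝ × ℝ) +
                      Measure.dirac ((-mp, -mp) : ℝ × ℝ)))))) := by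
  have hγ : 1 < β / 2 := by linarith
  have hmp : 0 < mp := mp_pos (β / 2) hγ mp hmax
  obtain ⟨ρ, hρ0, hρ1, hcase1⟩ := lim_case1 (β / 2) hγ mp hmp hfix
  have hlr : 0 < -Real.log ρ := by have := Real.log_neg hρ0 hρ1; linarith
  have hCρ : 0 < 12 / (-Real.log ρ) := by positivity
  refine ⟨40 + 12 / (-Real.log ρ), by positivity, ?_⟩
  intro p hp hlog Ω _ P hP E hE
  have hcount := ae_count (40 + 12 / (-Real.log ρ)) (by linarith) p hp hlog Ω P E hE
  have ht : Tendsto (fun n : ℕ => 2 * n) atTop atTop :=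
    tendsto_id.const_mul_atTop' (by norm_num)
  have hlow := log_lower _ p hlog
  constructor
  · intro hinf
    filter_upwards [hcount] with ω hω f
    have hlim := hcase1 (fun n => α (2 * n)) (fun n => hαpos _) (hα0.comp ht) (E ω)
      (by
        have h1 := (hinf.comp ht).atTop_div_const (show (0 : ℝ) < 4 by norm_num)
        refine tendsto_atTop_mono' _ ?_ h1
        filter_upwards [hω] with n hn
        have h2 := mul_le_mul_of_nonneg_left hn.1 (hαpos (2 * n)).le
        refine le_trans (le_of_eq ?_) h2
        simp only [Function.comp]
        push_cast
        ring)
      (poly_rho ρ hρ0 hρ1 _ (by linarith) (fun n => p (2 * n)) hlow (fun n => numOn (E ω n))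
        (hω.mono fun n hn => hn.1)) f
    have hval : ∫ x, f x ∂((2 : ENNReal)⁻¹ • (Measure.dirac ((mp, mp) : ℝ × ℝ) +
        Measure.dirac ((-mp, -mp) : ℝ × ℝ))) = (f (mp, mp) + f (-mp, -mp)) / 2 := by
      rw [integral_smul_measure, integral_add_measure (f.integrable _) (f.integrable _),
        integral_dirac, integral_dirac]
      simp
      ring
    rw [hval]
    refine hlim.congr' ?_
    filter_upwards [eventually_gt_atTop 0] with n hn
    exact (integral_dil n hn _ _ _ f).symm
  · intro hzero
    filter_upwards [hcount] with ω hω f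
    have hlim := lim_case2 (β / 2) hγ mp hmp hfix (fun n => α (2 * n)) (fun n => hαpos _) (E ω)
      (by
        have h1 := (hzero.comp ht).const_mul (3 / 2 : ℝ)
        rw [mul_zero] at h1
        refine tendsto_of_tendsto_of_tendsto_of_le_of_le' tendsto_const_nhds h1
          (Eventually.of_forall fun n => mul_nonneg (hαpos _).le (by positivity)) ?_
        filter_upwards [hω] with n hn
        have h2 := mul_le_mul_of_nonneg_left hn.2 (hαpos (2 * n)).le
        refine h2.trans (le_of_eq ?_)
        simp only [Function.comp]
        push_cast
        ring) f
    have hval : ∫ x, f x ∂((4 : ENNReal)⁻¹ • (Measure.dirac ((mp, mp) : ℝ × ℝ) +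
        Measure.dirac ((mp, -mp) : ℝ × ℝ) + Measure.dirac ((-mp, mp) : ℝ × ℝ) +
        Measure.dirac ((-mp, -mp) : ℝ × ℝ))) =
        (f (mp, mp) + f (mp, -mp) + f (-mp, mp) + f (-mp, -mp)) / 4 := by
      rw [integral_smul_measure, integral_add_measure (f.integrable _) (f.integrable _),
        integral_add_measure (f.integrable _) (f.integrable _),
        integral_add_measure (f.integrable _) (f.integrable _),
        integral_dirac, integral_dirac, integral_dirac, integral_dirac]
      simp
      ring
    rw [hval]
    refine hlim.congr' ?_
    filter_upwards [eventually_gt_atTop 0] with n hn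
    exact (integral_dil n hn _ _ _ f).symm

end
end

section
/- Let β > 2, ρ > 0, and α_N = N^{−ρ}. For any κ with 0 < κ < 1/2 and 2κ < ρ, the Gibbs measure of the complement of the typical set vanishes: μ_{N,α_N,β}((m₁(σ), m₂(σ)) ∉ A_κ^N) → 0 as N → ∞ through even integers. -/
open MeasureTheory Filter

noncomputable section

/-- The Hamiltonian
`H_{N,α,β}(σ) = −(β/(2N))(∑_{i,j∈B₁} σᵢσⱼ + ∑_{i,j∈B₂} σᵢσⱼ) − α ∑_{i∈B₁} σᵢ σ_{i+N/2}`
with `N = 2n`. -/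
def twoH (n : ℕ) (α β : ℝ) (σ : TwoConf n) : ℝ :=
  -(β / (2 * (2 * n : ℝ))) *
      ((∑ i, ∑ j, spinVal (σ.1 i) * spinVal (σ.1 j)) +
        ∑ i, ∑ j, spinVal (σ.2 i) * spinVal (σ.2 j))
    - α * ∑ i, spinVal (σ.1 i) * spinVal (σ.2 i)

/-- The distribution of the magnetization vector `(m₁, m₂)` under the Gibbs measure
`μ_{N,α,β}`, i.e. the pushforward of the Gibbs measure under `σ ↦ (m₁(σ), m₂(σ))`. -/
def twoMagDist (n : ℕ) (α β : ℝ) : Measure (ℝ × ℝ) :=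
  (∑ σ : TwoConf n, ENNReal.ofReal (Real.exp (-twoH n α β σ)))⁻¹ •
    ∑ σ : TwoConf n,
      ENNReal.ofReal (Real.exp (-twoH n α β σ)) • Measure.dirac (mag1 n σ, mag2 n σ)

/-- Membership in the typical set `A_κ^N ⊆ [−1,1]²`: the union over sign choices
`s₁, s₂ ∈ {+,−}` of the open squares of half-width `N^{−κ}` centered at
`(m^{s₁}(β/2), m^{s₂}(β/2))`, where `mp = m⁺(β/2)` and `m⁻(β/2) = −mp`. -/
def memTyp (mp κ : ℝ) (N : ℕ) (x : ℝ × ℝ) : Prop :=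
  ∃ s₁ s₂ : Bool,
    |x.1 - (if s₁ then mp else -mp)| < (N : ℝ) ^ (-κ) ∧
    |x.2 - (if s₂ then mp else -mp)| < (N : ℝ) ^ (-κ)


lemma aux_hasDerivAt_tanh (x : ℝ) : HasDerivAt Real.tanh (1 / Real.cosh x ^ 2) x := by
  have h := (Real.hasDerivAt_sinh x).div (Real.hasDerivAt_cosh x) (Real.cosh_pos x).ne'
  have e : Real.tanh = Real.sinh / Real.cosh := by
    funext y; simp [Real.tanh_eq_sinh_div_cosh]
  rw [e]
  refine h.congr_deriv ?_
  congr 1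
  have := Real.cosh_sq x
  linarith

lemma aux_tanh_lt_one (x : ℝ) : Real.tanh x < 1 := by
  rw [Real.tanh_eq_sinh_div_cosh, div_lt_one (Real.cosh_pos x)]
  exact Real.sinh_lt_cosh x

lemma aux_sq_le_cosh (x : ℝ) (hx : 0 ≤ x) : 1 + x ^ 2 / 2 ≤ Real.cosh x := by
  have hd : ∀ y : ℝ, HasDerivAt (fun y => Real.cosh y - (1 + y ^ 2 / 2)) (Real.sinh y - y) y := by
    intro y
    have := (Real.hasDerivAt_cosh y).sub ((((hasDerivAt_id' y).pow 2).div_const 2).const_add 1)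
    refine this.congr_deriv ?_
    simp
  have hm : MonotoneOn (fun y => Real.cosh y - (1 + y ^ 2 / 2)) (Set.Ici 0) := by
    apply monotoneOn_of_deriv_nonneg (convex_Ici 0)
    · exact fun y _ => (hd y).continuousAt.continuousWithinAt
    · exact fun y _ => (hd y).differentiableAt.differentiableWithinAt
    · intro y hy
      rw [(hd y).deriv]
      simp only [interior_Ici, Set.mem_Ioi] at hy
      have := Real.self_le_sinh_iff.2 hy.le
      linarith
  have := hm (Set.mem_Ici.2 le_rfl) (Set.mem_Ici.2 hx) hx
  simp at this
  linarith

lemma aux_cube_le_sinh (x : ℝ) (hx : 0 ≤ x) : x + x ^ 3 / 6 ≤ Real.sinh x := by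
  have hd : ∀ y : ℝ, HasDerivAt (fun y => Real.sinh y - (y + y ^ 3 / 6))
      (Real.cosh y - (1 + y ^ 2 / 2)) y := by
    intro y
    have := (Real.hasDerivAt_sinh y).sub ((hasDerivAt_id' y).add (((hasDerivAt_id' y).pow 3).div_const 6))
    refine this.congr_deriv ?_
    simp
    ring
  have hm : MonotoneOn (fun y => Real.sinh y - (y + y ^ 3 / 6)) (Set.Ici 0) := by
    apply monotoneOn_of_deriv_nonneg (convex_Ici 0)
    · exact fun y _ => (hd y).continuousAt.continuousWithinAt
    · exact fun y _ => (hd y).differentiableAt.differentiableWithinAt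
    · intro y hy
      rw [(hd y).deriv]
      simp only [interior_Ici, Set.mem_Ioi] at hy
      have := aux_sq_le_cosh y hy.le
      linarith
  have := hm (Set.mem_Ici.2 le_rfl) (Set.mem_Ici.2 hx) hx
  simp at this
  linarith

lemma aux_mp_pos (γ mp : ℝ) (hγ : 1 < γ)
    (hmax : ∀ z : ℝ, z = Real.tanh (γ * z) → z ≤ mp) : 0 < mp := by
  set x := Real.arcosh γ with hx
  have hc : Real.cosh x = γ := Real.cosh_arcosh hγ.le
  have hx0 : 0 < x := by
    have h0 : 0 ≤ x := Real.arcosh_nonneg hγ.le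
    rcases h0.eq_or_lt with h | h
    · rw [← h, Real.cosh_zero] at hc; linarith
    · exact h
  have hz : 0 < x / γ := by positivity
  have h1 : x / γ ≤ Real.tanh (γ * (x / γ)) := by
    rw [mul_div_cancel₀ _ (by linarith), Real.tanh_eq_sinh_div_cosh, hc]
    have := Real.self_le_sinh_iff.2 hx0.le
    gcongr
  have hcont : ContinuousOn (fun z => Real.tanh (γ * z) - z) (Set.Icc (x / γ) 1) := by
    have : Continuous Real.tanh :=
      continuous_iff_continuousAt.2 fun y => (aux_hasDerivAt_tanh y).continuousAt
    fun_prop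
  have hle : x / γ ≤ 1 := h1.trans (aux_tanh_lt_one _).le
  have := intermediate_value_Icc' hle hcont
  have h0 : (0 : ℝ) ∈ Set.Icc (Real.tanh (γ * 1) - 1) (Real.tanh (γ * (x / γ)) - x / γ) :=
    ⟨by have := aux_tanh_lt_one (γ * 1); linarith, by linarith⟩
  obtain ⟨z, hz1, hz2⟩ := this h0
  have := hmax z (by simp only at hz2; linarith)
  linarith [hz1.1]

lemma aux_q_anti (γ : ℝ) (hγ : 1 < γ) :
    AntitoneOn (fun m => Real.tanh (γ * m) / m + γ ^ 3 / (3 * Real.cosh γ ^ 2) * m ^ 2)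
      (Set.Ioc 0 1) := by
  set c := γ ^ 3 / (3 * Real.cosh γ ^ 2) with hc
  have hd : ∀ m : ℝ, 0 < m → HasDerivAt (fun m => Real.tanh (γ * m) / m + c * m ^ 2)
      ((1 / Real.cosh (γ * m) ^ 2 * γ * m - Real.tanh (γ * m)) / m ^ 2 + c * (2 * m)) m := by
    intro m hm
    have h1 : HasDerivAt (fun m => Real.tanh (γ * m)) (1 / Real.cosh (γ * m) ^ 2 * γ) m := by
      have := (aux_hasDerivAt_tanh (γ * m)).comp m ((hasDerivAt_id' m).const_mul γ)
      exact this.congr_deriv (by simp)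
    have := (h1.div (hasDerivAt_id' m) hm.ne').add (((hasDerivAt_id' m).pow 2).const_mul c)
    refine this.congr_deriv ?_
    simp
  apply antitoneOn_of_deriv_nonpos (convex_Ioc 0 1)
  · exact fun y hy => (hd y hy.1).continuousAt.continuousWithinAt
  · intro y hy
    rw [interior_Ioc] at hy
    exact (hd y hy.1).differentiableAt.differentiableWithinAt
  · intro m hm
    rw [interior_Ioc] at hm
    rw [(hd m hm.1).deriv]
    have hm0 := hm.1
    have hC : 0 < Real.cosh (γ * m) := Real.cosh_pos _
    have hCle : Real.cosh (γ * m) ≤ Real.cosh γ := by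
      rw [Real.cosh_le_cosh, abs_of_pos (by positivity), abs_of_pos (by positivity)]
      nlinarith [hm.2]
    have hs := aux_cube_le_sinh (2 * (γ * m)) (by positivity)
    rw [Real.sinh_two_mul] at hs
    have hcc : c ≤ γ ^ 3 / (3 * Real.cosh (γ * m) ^ 2) := by
      rw [hc]; gcongr
    have e : (1 / Real.cosh (γ * m) ^ 2 * γ * m - Real.tanh (γ * m)) / m ^ 2
        = (γ * m - Real.sinh (γ * m) * Real.cosh (γ * m)) / (Real.cosh (γ * m) ^ 2 * m ^ 2) := by
      rw [Real.tanh_eq_sinh_div_cosh]; field_simp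
    rw [e]
    have e2 : (γ * m - Real.sinh (γ * m) * Real.cosh (γ * m)) / (Real.cosh (γ * m) ^ 2 * m ^ 2)
        ≤ (-(2 / 3 * (γ * m) ^ 3)) / (Real.cosh (γ * m) ^ 2 * m ^ 2) := by
      gcongr
      nlinarith
    have e3 : (-(2 / 3 * (γ * m) ^ 3)) / (Real.cosh (γ * m) ^ 2 * m ^ 2)
        = - (γ ^ 3 / (3 * Real.cosh (γ * m) ^ 2) * (2 * m)) := by
      field_simp
    have e4 : c * (2 * m) ≤ γ ^ 3 / (3 * Real.cosh (γ * m) ^ 2) * (2 * m) := by gcongr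
    linarith

/-- The Curie-Weiss potential. -/
noncomputable def cwG (γ m : ℝ) : ℝ := Real.log (2 * Real.cosh (γ * m)) - γ * m ^ 2 / 2

lemma aux_pot_nonneg (γ mp : ℝ) (hγ : 1 < γ) (hmp : 0 < mp) (hfix : mp = Real.tanh (γ * mp))
    (m : ℝ) (hm0 : 0 ≤ m) (hm1 : m ≤ 1) :
    cwG γ m + γ * (γ ^ 3 / (3 * Real.cosh γ ^ 2)) / 4 * (m ^ 2 - mp ^ 2) ^ 2 ≤ cwG γ mp := by
  have hq := aux_q_anti γ hγ
  set c := γ ^ 3 / (3 * Real.cosh γ ^ 2) with hc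
  have hmp1 : mp < 1 := by rw [hfix]; exact aux_tanh_lt_one _
  set L : ℝ → ℝ := fun m => cwG γ m + γ * c / 4 * (m ^ 2 - mp ^ 2) ^ 2 with hL
  have hd : ∀ m, HasDerivAt L (γ * (Real.tanh (γ * m) - m) + γ * c * m * (m ^ 2 - mp ^ 2)) m := by
    intro m
    have h1 : HasDerivAt (fun m => Real.log (2 * Real.cosh (γ * m))) (γ * Real.tanh (γ * m)) m := by
      have h := (((Real.hasDerivAt_cosh (γ * m)).comp m
        ((hasDerivAt_id' m).const_mul γ)).const_mul 2).log
        (by have := Real.cosh_pos (γ * m); simp; positivity)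
      refine h.congr_deriv ?_
      have := (Real.cosh_pos (γ * m)).ne'
      rw [Real.tanh_eq_sinh_div_cosh, Function.comp_apply]
      field_simp
    have h2 := (((hasDerivAt_id' m).pow 2).const_mul γ).div_const 2
    have h3 := ((((hasDerivAt_id' m).pow 2).sub_const (mp ^ 2)).pow 2).const_mul (γ * c / 4)
    have := (h1.sub h2).add h3
    refine this.congr_deriv ?_
    simp
    ring
  have hder : ∀ m, 0 < m → γ * (Real.tanh (γ * m) - m) + γ * c * m * (m ^ 2 - mp ^ 2)
      = γ * m * ((Real.tanh (γ * m) / m + c * m ^ 2) - (Real.tanh (γ * mp) / mp + c * mp ^ 2)) := by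
    intro m hm
    rw [← hfix]
    field_simp
    ring
  have hres : L m ≤ L mp := by
    rcases le_total m mp with h | h
    · have hm : MonotoneOn L (Set.Icc 0 mp) := by
        apply monotoneOn_of_deriv_nonneg (convex_Icc 0 mp)
        · exact fun y _ => (hd y).continuousAt.continuousWithinAt
        · exact fun y _ => (hd y).differentiableAt.differentiableWithinAt
        · intro y hy
          rw [interior_Icc] at hy
          rw [(hd y).deriv, hder y hy.1]
          have := hq (a := y) ⟨hy.1, by linarith [hy.2]⟩ (b := mp) ⟨hmp, hmp1.le⟩ hy.2.le
          have h0 := hy.1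
          apply mul_nonneg (by positivity)
          simp only at this
          linarith
      exact hm ⟨hm0, h⟩ ⟨hmp.le, le_rfl⟩ h
    · have hm : AntitoneOn L (Set.Icc mp 1) := by
        apply antitoneOn_of_deriv_nonpos (convex_Icc mp 1)
        · exact fun y _ => (hd y).continuousAt.continuousWithinAt
        · exact fun y _ => (hd y).differentiableAt.differentiableWithinAt
        · intro y hy
          rw [interior_Icc] at hy
          have h0 : 0 < y := hmp.trans hy.1
          rw [(hd y).deriv, hder y h0]
          have := hq (a := mp) ⟨hmp, hmp1.le⟩ (b := y) ⟨h0, hy.2.le⟩ hy.1.le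
          apply mul_nonpos_of_nonneg_of_nonpos (by positivity)
          simp only at this
          linarith
      exact hm ⟨le_rfl, hmp1.le⟩ ⟨h, hm1⟩ h
  simpa [hL] using hres

lemma aux_pot (γ mp : ℝ) (hγ : 1 < γ) (hfix : mp = Real.tanh (γ * mp))
    (hmax : ∀ z : ℝ, z = Real.tanh (γ * z) → z ≤ mp) :
    ∃ c : ℝ, 0 < c ∧ ∀ m : ℝ, |m| ≤ 1 → ∀ δ : ℝ, 0 ≤ δ → δ ≤ |m - mp| → δ ≤ |m + mp| →
      cwG γ m ≤ cwG γ mp - c * δ ^ 2 := by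
  have hmp := aux_mp_pos γ mp hγ hmax
  have hC := Real.cosh_pos γ
  refine ⟨γ * (γ ^ 3 / (3 * Real.cosh γ ^ 2)) / 4 * mp ^ 2, by positivity, ?_⟩
  intro m hm δ hδ h1 h2
  have key := aux_pot_nonneg γ mp hγ hmp hfix |m| (abs_nonneg m) hm
  have e : cwG γ |m| = cwG γ m := by
    unfold cwG
    rw [sq_abs]
    rcases abs_choice m with h | h <;> rw [h]
    rw [mul_neg, Real.cosh_neg]
  rw [e] at key
  have hA : 0 ≤ γ * (γ ^ 3 / (3 * Real.cosh γ ^ 2)) / 4 := by positivity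
  have h3 : mp ^ 2 * δ ^ 2 ≤ (|m| ^ 2 - mp ^ 2) ^ 2 := by
    have h4 : mp * δ ≤ |(|m| ^ 2 - mp ^ 2)| := by
      rw [sq_sub_sq, abs_mul]
      have : δ ≤ |(|m| - mp)| := by
        rcases abs_choice m with h | h <;> rw [h]
        · exact h1
        · rw [show -m - mp = -(m + mp) by ring, abs_neg]; exact h2
      have h5 : mp ≤ |(|m| + mp)| := by
        have := abs_nonneg m
        exact le_trans (by linarith) (le_abs_self _)
      gcongr
    calc mp ^ 2 * δ ^ 2 = (mp * δ) ^ 2 := by ring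
      _ ≤ |(|m| ^ 2 - mp ^ 2)| ^ 2 := by gcongr
      _ = _ := sq_abs _
  have := mul_le_mul_of_nonneg_left h3 hA
  linarith

/-- Total spin of one block. -/
def cwS (n : ℕ) (τ : Fin n → Bool) : ℝ := ∑ i, spinVal (τ i)

/-- Curie-Weiss weight of one block. -/
def cwW (n : ℕ) (β : ℝ) (τ : Fin n → Bool) : ℝ := Real.exp (β / (4 * n) * cwS n τ ^ 2)

/-- The magnetization value `x` is atypical. -/
def cwBad (mp δ x : ℝ) : Prop := δ ≤ |x - mp| ∧ δ ≤ |x + mp|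

lemma aux_sum_exp (n : ℕ) (h : ℝ) :
    ∑ τ : Fin n → Bool, Real.exp (h * cwS n τ) = (2 * Real.cosh h) ^ n := by
  have e : ∀ τ : Fin n → Bool, Real.exp (h * cwS n τ) = ∏ i, Real.exp (h * spinVal (τ i)) := by
    intro τ
    rw [← Real.exp_sum, cwS, Finset.mul_sum]
  simp_rw [e]
  have := Finset.prod_univ_sum (fun _ : Fin n => (Finset.univ : Finset Bool))
    (fun _ b => Real.exp (h * spinVal b))
  rw [Fintype.piFinset_univ] at this
  rw [← this]
  simp [spinVal, Real.cosh_eq]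
  congr 1
  ring

lemma aux_tilt (n : ℕ) (γ x : ℝ) :
    ∑ τ : Fin n → Bool, Real.exp (-(n * γ * x ^ 2 / 2) + γ * x * cwS n τ)
      = Real.exp (n * cwG γ x) := by
  simp_rw [Real.exp_add]
  rw [← Finset.mul_sum, aux_sum_exp]
  have hC : 0 < 2 * Real.cosh (γ * x) := by have := Real.cosh_pos (γ * x); positivity
  rw [cwG, mul_sub, sub_eq_add_neg, add_comm, Real.exp_add, mul_comm (n : ℝ) (Real.log _),
    Real.exp_mul, Real.exp_log hC, Real.rpow_natCast]
  congr 2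
  ring

lemma aux_Z_lower (n : ℕ) (hn : 0 < n) (β x : ℝ) (hβ : 0 < β) :
    Real.exp (n * cwG (β / 2) x) ≤ ∑ τ, cwW n β τ := by
  rw [← aux_tilt]
  apply Finset.sum_le_sum
  intro τ _
  apply Real.exp_le_exp.2
  have hn' : (0 : ℝ) < n := by exact_mod_cast hn
  have : β / (4 * n) * cwS n τ ^ 2 - (-(n * (β / 2) * x ^ 2 / 2) + β / 2 * x * cwS n τ)
      = β / (4 * n) * (cwS n τ - n * x) ^ 2 := by
    field_simp
    ring
  have h2 : 0 ≤ β / (4 * n) * (cwS n τ - n * x) ^ 2 := by positivity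
  linarith

lemma aux_S_eq (n : ℕ) (τ : Fin n → Bool) :
    ∃ k ∈ Finset.range (n + 1), cwS n τ = 2 * (k : ℝ) - n := by
  refine ⟨(Finset.univ.filter fun i => τ i = true).card, ?_, ?_⟩
  · rw [Finset.mem_range, Nat.lt_succ_iff]
    simpa using Finset.card_le_univ (Finset.univ.filter fun i => τ i = true)
  · have e : ∀ i, spinVal (τ i) = 2 * (if τ i = true then (1 : ℝ) else 0) - 1 := by
      intro i
      unfold spinVal
      split_ifs <;> norm_num
    unfold cwS
    simp_rw [e]
    rw [Finset.sum_sub_distrib, ← Finset.mul_sum]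
    simp

open Classical in
lemma aux_bad_upper (n : ℕ) (hn : 0 < n) (β mp c δ : ℝ) (hδ : 0 ≤ δ)
    (hc : ∀ m : ℝ, |m| ≤ 1 → ∀ δ : ℝ, 0 ≤ δ → δ ≤ |m - mp| → δ ≤ |m + mp| →
      cwG (β / 2) m ≤ cwG (β / 2) mp - c * δ ^ 2) :
    ∑ τ : Fin n → Bool, (if cwBad mp δ (cwS n τ / n) then cwW n β τ else 0)
      ≤ (n + 1) * Real.exp (n * (cwG (β / 2) mp - c * δ ^ 2)) := by
  have hn' : (0 : ℝ) < n := by exact_mod_cast hn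
  set s : ℕ → ℝ := fun k => (2 * (k : ℝ) - n) / n with hs
  have h1 : ∀ τ : Fin n → Bool, (if cwBad mp δ (cwS n τ / n) then cwW n β τ else 0)
      ≤ ∑ k ∈ Finset.range (n + 1), if cwBad mp δ (s k) then
        Real.exp (-(n * (β / 2) * s k ^ 2 / 2) + β / 2 * s k * cwS n τ) else 0 := by
    intro τ
    have hnn : ∀ k ∈ Finset.range (n + 1), 0 ≤ (if cwBad mp δ (s k) then
        Real.exp (-(n * (β / 2) * s k ^ 2 / 2) + β / 2 * s k * cwS n τ) else 0) := by
      intro k _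
      split_ifs <;> positivity
    split_ifs with hb
    · obtain ⟨k, hk, hk2⟩ := aux_S_eq n τ
      refine le_trans (le_of_eq ?_) (Finset.single_le_sum hnn hk)
      have : s k = cwS n τ / n := by rw [hk2]
      rw [this, if_pos hb, cwW]
      congr 1
      field_simp
      ring
    · exact Finset.sum_nonneg hnn
  refine (Finset.sum_le_sum fun τ _ => h1 τ).trans ?_
  rw [Finset.sum_comm]
  have h2 : ∀ k ∈ Finset.range (n + 1), (∑ τ : Fin n → Bool, if cwBad mp δ (s k) then
        Real.exp (-(n * (β / 2) * s k ^ 2 / 2) + β / 2 * s k * cwS n τ) else 0)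
      ≤ Real.exp (n * (cwG (β / 2) mp - c * δ ^ 2)) := by
    intro k hk
    by_cases hb : cwBad mp δ (s k)
    · simp only [if_pos hb]
      rw [aux_tilt]
      apply Real.exp_le_exp.2
      refine mul_le_mul_of_nonneg_left (hc _ ?_ δ hδ hb.1 hb.2) hn'.le
      have hk' : (k : ℝ) ≤ n := by
        exact_mod_cast Nat.lt_succ_iff.1 (Finset.mem_range.1 hk)
      have hk0 : (0 : ℝ) ≤ k := by positivity
      rw [hs, abs_le]
      constructor
      · rw [le_div_iff₀ hn']; linarith
      · rw [div_le_iff₀ hn']; linarith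
    · simp only [if_neg hb]
      simp only [Finset.sum_const_zero]
      positivity
  refine (Finset.sum_le_sum h2).trans ?_
  simp

lemma aux_H (n : ℕ) (α β : ℝ) (hα : 0 ≤ α) (σ : TwoConf n) :
    Real.exp (-twoH n α β σ) ≤ Real.exp (α * n) * (cwW n β σ.1 * cwW n β σ.2) ∧
    Real.exp (-(α * n)) * (cwW n β σ.1 * cwW n β σ.2) ≤ Real.exp (-twoH n α β σ) := by
  have hsq : ∀ τ : Fin n → Bool, (∑ i, ∑ j, spinVal (τ i) * spinVal (τ j)) = cwS n τ ^ 2 := by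
    intro τ
    rw [cwS, sq, Finset.sum_mul_sum]
  have hb : |∑ i, spinVal (σ.1 i) * spinVal (σ.2 i)| ≤ n := by
    refine (Finset.abs_sum_le_sum_abs _ _).trans ?_
    have : ∀ i ∈ (Finset.univ : Finset (Fin n)), |spinVal (σ.1 i) * spinVal (σ.2 i)| ≤ 1 := by
      intro i _
      unfold spinVal
      split_ifs <;> norm_num
    refine (Finset.sum_le_sum this).trans ?_
    simp
  have hH : -twoH n α β σ = β / (4 * n) * cwS n σ.1 ^ 2 + β / (4 * n) * cwS n σ.2 ^ 2
      + α * ∑ i, spinVal (σ.1 i) * spinVal (σ.2 i) := by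
    rw [twoH, hsq, hsq, show (2 * (2 * (n : ℝ))) = 4 * n by ring]
    ring
  rw [abs_le] at hb
  have h1 := mul_le_mul_of_nonneg_left hb.1 hα
  have h2 := mul_le_mul_of_nonneg_left hb.2 hα
  unfold cwW
  rw [hH, ← Real.exp_add, ← Real.exp_add, ← Real.exp_add]
  constructor <;> apply Real.exp_le_exp.2 <;> linarith

lemma aux_mag (n : ℕ) (σ : TwoConf n) :
    mag1 n σ = cwS n σ.1 / n ∧ mag2 n σ = cwS n σ.2 / n := by
  unfold mag1 mag2 cwS
  constructor <;> rw [mul_comm 2 (n : ℝ), div_mul_cancel_right₀ (by norm_num), inv_mul_eq_div]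

lemma aux_not_typ (mp κ : ℝ) (N : ℕ) (x : ℝ × ℝ) (h : ¬ memTyp mp κ N x) :
    cwBad mp ((N : ℝ) ^ (-κ)) x.1 ∨ cwBad mp ((N : ℝ) ^ (-κ)) x.2 := by
  by_contra hcon
  rw [not_or] at hcon
  obtain ⟨h1, h2⟩ := hcon
  have key : ∀ y, ¬ cwBad mp ((N : ℝ) ^ (-κ)) y →
      ∃ s : Bool, |y - (if s then mp else -mp)| < (N : ℝ) ^ (-κ) := by
    intro y hy
    unfold cwBad at hy
    rw [not_and_or, not_le, not_le] at hy
    rcases hy with hy | hy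
    · exact ⟨true, by simpa using hy⟩
    · exact ⟨false, by simpa using hy⟩
  obtain ⟨s1, hs1⟩ := key _ h1
  obtain ⟨s2, hs2⟩ := key _ h2
  exact h ⟨s1, s2, hs1, hs2⟩

open Classical in
lemma aux_measure_bound (n : ℕ) (hn : 0 < n) (α β mp κ c : ℝ) (hα : 0 ≤ α) (hβ : 0 < β)
    (hc : ∀ m : ℝ, |m| ≤ 1 → ∀ δ : ℝ, 0 ≤ δ → δ ≤ |m - mp| → δ ≤ |m + mp| →
      cwG (β / 2) m ≤ cwG (β / 2) mp - c * δ ^ 2) :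
    twoMagDist n α β {x : ℝ × ℝ | ¬ memTyp mp κ (2 * n) x} ≤
      ENNReal.ofReal (2 * (n + 1) *
        Real.exp (2 * (α * n) - n * (c * (((2 * n : ℕ) : ℝ) ^ (-κ)) ^ 2))) := by
  set δ : ℝ := ((2 * n : ℕ) : ℝ) ^ (-κ) with hδdef
  have hδ : 0 ≤ δ := by positivity
  set A : Set (ℝ × ℝ) := {x : ℝ × ℝ | ¬ memTyp mp κ (2 * n) x} with hA
  set w : TwoConf n → ℝ := fun σ => Real.exp (-twoH n α β σ) with hw
  set Z := ∑ τ, cwW n β τ with hZ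
  set Bd := ∑ τ : Fin n → Bool, (if cwBad mp δ (cwS n τ / n) then cwW n β τ else 0) with hBd
  have hWpos : ∀ τ, 0 < cwW n β τ := fun τ => Real.exp_pos _
  have hZlow := aux_Z_lower n hn β mp hβ
  rw [← hZ] at hZlow
  have hZpos : 0 < Z := lt_of_lt_of_le (Real.exp_pos _) hZlow
  have hBdup : Bd ≤ (n + 1) * Real.exp (n * (cwG (β / 2) mp - c * δ ^ 2)) :=
    aux_bad_upper n hn β mp c δ hδ hc
  -- the total mass
  have hden : Real.exp (-(α * n)) * (Z * Z) ≤ ∑ σ, w σ := by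
    rw [hZ, Finset.sum_mul_sum, ← Finset.sum_product', Finset.mul_sum]
    exact Finset.sum_le_sum fun σ _ => (aux_H n α β hα σ).2
  -- the mass of the atypical set
  have hnum : ∑ σ, (if (mag1 n σ, mag2 n σ) ∈ A then w σ else 0)
      ≤ Real.exp (α * n) * (2 * (Bd * Z)) := by
    have hpt : ∀ σ : TwoConf n, (if (mag1 n σ, mag2 n σ) ∈ A then w σ else 0) ≤
        Real.exp (α * n) *
          ((if cwBad mp δ (cwS n σ.1 / n) then cwW n β σ.1 else 0) * cwW n β σ.2
          + cwW n β σ.1 * (if cwBad mp δ (cwS n σ.2 / n) then cwW n β σ.2 else 0)) := by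
      intro σ
      have p1 := hWpos σ.1
      have p2 := hWpos σ.2
      by_cases hmem : (mag1 n σ, mag2 n σ) ∈ A
      · rw [if_pos hmem]
        refine (aux_H n α β hα σ).1.trans ?_
        refine mul_le_mul_of_nonneg_left ?_ (Real.exp_pos _).le
        have hb := aux_not_typ _ _ _ _ hmem
        rw [← hδdef] at hb
        simp only [(aux_mag n σ).1, (aux_mag n σ).2] at hb
        rcases hb with hb | hb
        · rw [if_pos hb]
          have : 0 ≤ cwW n β σ.1 * (if cwBad mp δ (cwS n σ.2 / n) then cwW n β σ.2 else 0) := by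
            split_ifs <;> positivity
          linarith
        · rw [if_pos hb]
          have : 0 ≤ (if cwBad mp δ (cwS n σ.1 / n) then cwW n β σ.1 else 0) * cwW n β σ.2 := by
            split_ifs <;> positivity
          linarith
      · rw [if_neg hmem]
        apply mul_nonneg (Real.exp_pos _).le
        split_ifs <;> positivity
    refine (Finset.sum_le_sum fun σ _ => hpt σ).trans (le_of_eq ?_)
    rw [← Finset.mul_sum, Finset.sum_add_distrib]
    congr 1
    have e1 : Bd * Z = ∑ σ : TwoConf n,
        (if cwBad mp δ (cwS n σ.1 / n) then cwW n β σ.1 else 0) * cwW n β σ.2 := by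
      rw [hBd, hZ, Finset.sum_mul_sum, ← Finset.sum_product']
      rfl
    have e2 : Z * Bd = ∑ σ : TwoConf n,
        cwW n β σ.1 * (if cwBad mp δ (cwS n σ.2 / n) then cwW n β σ.2 else 0) := by
      rw [hBd, hZ, Finset.sum_mul_sum, ← Finset.sum_product']
      rfl
    rw [← e1, ← e2]
    ring
  -- the measure
  have hwpos : ∀ σ, 0 < w σ := fun σ => Real.exp_pos _
  have hWsum : 0 < ∑ σ, w σ := lt_of_lt_of_le (by positivity) hden
  have hmeas : twoMagDist n α β A = ENNReal.ofReal
      ((∑ σ, w σ)⁻¹ * ∑ σ, (if (mag1 n σ, mag2 n σ) ∈ A then w σ else 0)) := by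
    rw [ENNReal.ofReal_mul (by positivity), ENNReal.ofReal_inv_of_pos hWsum,
      ENNReal.ofReal_sum_of_nonneg (fun σ _ => (hwpos σ).le),
      ENNReal.ofReal_sum_of_nonneg (fun σ _ => by split_ifs <;> [exact (hwpos σ).le; exact le_rfl])]
    unfold twoMagDist
    rw [Measure.smul_apply, smul_eq_mul, Measure.finsetSum_apply]
    congr 1
    apply Finset.sum_congr rfl
    intro σ _
    rw [Measure.smul_apply, smul_eq_mul, Measure.dirac_apply]
    by_cases hmem : (mag1 n σ, mag2 n σ) ∈ A
    · simp [hmem, hw]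
    · simp [hmem]
  rw [hmeas]
  apply ENNReal.ofReal_le_ofReal
  rw [inv_mul_le_iff₀ hWsum]
  refine hnum.trans ?_
  have hfin : Real.exp (α * n) * (2 * (Bd * Z)) ≤ Real.exp (-(α * n)) * (Z * Z) *
      (2 * (n + 1) * Real.exp (2 * (α * n) - n * (c * δ ^ 2))) := by
    have e : Real.exp (-(α * n)) * (Z * Z) *
        (2 * (n + 1) * Real.exp (2 * (α * n) - n * (c * δ ^ 2)))
        = Real.exp (α * n) * (2 * (((n + 1) * (Z * Real.exp (-(n * (c * δ ^ 2))))) * Z)) := by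
      rw [show 2 * (α * n) - n * (c * δ ^ 2) = α * n + α * n + -(n * (c * δ ^ 2)) by ring,
        Real.exp_add, Real.exp_add, Real.exp_neg (α * n)]
      field_simp
    rw [e]
    have : Bd ≤ (n + 1) * (Z * Real.exp (-(n * (c * δ ^ 2)))) := by
      refine hBdup.trans ?_
      rw [mul_sub, sub_eq_add_neg, Real.exp_add]
      gcongr
    gcongr
  refine hfin.trans ?_
  gcongr

lemma aux_limit (ρ κ c : ℝ) (hc : 0 < c) (hκhalf : κ < 1 / 2) (hκρ : 2 * κ < ρ) :
    Tendsto (fun n : ℕ => 2 * ((n : ℝ) + 1) *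
        Real.exp (2 * (((2 * n : ℕ) : ℝ) ^ (-ρ) * n) - n * (c * (((2 * n : ℕ) : ℝ) ^ (-κ)) ^ 2)))
      atTop (nhds 0) := by
  have hε : 0 < 1 - 2 * κ := by linarith
  have hN : Tendsto (fun n : ℕ => ((2 * n : ℕ) : ℝ)) atTop atTop := by
    refine tendsto_natCast_atTop_atTop.comp ?_
    exact tendsto_id.const_mul_atTop' (by norm_num)
  have h1 : Tendsto (fun x : ℝ => 3 * (x * Real.exp (-(c / 4) * x ^ (1 - 2 * κ)))) atTop (nhds 0) := by
    have h := (tendsto_rpow_mul_exp_neg_mul_atTop_nhds_zero (1 / (1 - 2 * κ)) (c / 4)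
      (by positivity)).comp (tendsto_rpow_atTop hε)
    have h' := h.const_mul 3
    rw [mul_zero] at h'
    refine h'.congr' ?_
    filter_upwards [eventually_gt_atTop 0] with x hx
    simp only [Function.comp_apply]
    rw [← Real.rpow_mul hx.le, mul_one_div_cancel hε.ne', Real.rpow_one]
  have h2 : ∀ᶠ x : ℝ in atTop, x ^ (-(ρ - 2 * κ)) ≤ c / 4 :=
    (tendsto_rpow_neg_atTop (by linarith : 0 < ρ - 2 * κ)).eventually_le_const (by positivity)
  refine squeeze_zero' (Eventually.of_forall fun n => by positivity) ?_ (h1.comp hN)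
  filter_upwards [hN.eventually h2, hN.eventually (eventually_ge_atTop (1 : ℝ))] with n hn hn1
  simp only [Function.comp_apply]
  have hnx : (n : ℝ) = ((2 * n : ℕ) : ℝ) / 2 := by push_cast; ring
  generalize ((2 * n : ℕ) : ℝ) = x at *
  rw [hnx]
  have hx : 0 < x := by linarith
  have e1 : x ^ (-ρ) * x = x ^ (1 - 2 * κ) * x ^ (-(ρ - 2 * κ)) := by
    rw [← Real.rpow_add hx, ← Real.rpow_add_one hx.ne']
    congr 1; ring
  have e2 : x * (x ^ (-κ)) ^ 2 = x ^ (1 - 2 * κ) := by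
    rw [← Real.rpow_natCast, ← Real.rpow_mul hx.le, mul_comm, ← Real.rpow_add_one hx.ne']
    congr 1; push_cast; ring
  have hp : 0 < x ^ (1 - 2 * κ) := by positivity
  have e3 : 2 * (x ^ (-ρ) * (x / 2)) - x / 2 * (c * (x ^ (-κ)) ^ 2)
      ≤ -(c / 4) * x ^ (1 - 2 * κ) := by
    have : 2 * (x ^ (-ρ) * (x / 2)) - x / 2 * (c * (x ^ (-κ)) ^ 2)
      = x ^ (-ρ) * x - c / 2 * (x * (x ^ (-κ)) ^ 2) := by ring
    rw [this, e1, e2]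
    nlinarith
  calc _ ≤ 2 * (x / 2 + 1) * Real.exp (-(c / 4) * x ^ (1 - 2 * κ)) := by gcongr
    _ ≤ (3 * x) * Real.exp (-(c / 4) * x ^ (1 - 2 * κ)) := by
        refine mul_le_mul_of_nonneg_right ?_ (Real.exp_pos _).le
        linarith
    _ = _ := by ring

/-- Proposition 3.1: for `β > 2`, `α_N = N^{−ρ}` with `ρ > 0`, and `0 < κ < 1/2` with
`2κ < ρ`, the Gibbs measure of the complement of the typical set `A_κ^N` vanishes:
`μ_{N,α_N,β}((m₁, m₂) ∉ A_κ^N) → 0` as `N → ∞` through even integers. -/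
theorem gibbs_concentration_on_typical_set (β ρ κ : ℝ) (hβ : 2 < β) (hρ : 0 < ρ)
    (hκ0 : 0 < κ) (hκhalf : κ < 1 / 2) (hκρ : 2 * κ < ρ) (mp : ℝ)
    (hfix : mp = Real.tanh (β / 2 * mp))
    (hmax : ∀ z : ℝ, z = Real.tanh (β / 2 * z) → z ≤ mp) :
    Tendsto
      (fun n : ℕ =>
        twoMagDist n (((2 * n : ℕ) : ℝ) ^ (-ρ)) β {x : ℝ × ℝ | ¬ memTyp mp κ (2 * n) x})
      atTop (nhds (0 : ENNReal)) := by
  obtain ⟨c, hc, hpot⟩ := aux_pot (β / 2) mp (by linarith) hfix hmax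
  have hlim := ENNReal.tendsto_ofReal (aux_limit ρ κ c hc hκhalf hκρ)
  rw [ENNReal.ofReal_zero] at hlim
  refine tendsto_of_tendsto_of_tendsto_of_le_of_le' tendsto_const_nhds hlim
    (Eventually.of_forall fun n => zero_le) ?_
  filter_upwards [eventually_gt_atTop 0] with n hn
  exact aux_measure_bound n hn _ β mp κ c (by positivity) (by linarith) hpot

end
end
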